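/- Let n ≥ 1, T > 0, let Ω_T = (0,1)ⁿ × (0,T) ⊂ ℝ^{n+1}, and let m be a positive integer with m > (n+2)/4. Then there exists a constant C = C(m,n,T) > 0 such that for every function u that is smooth on an open neighborhood of the closure of Ω_T, ‖u‖_{L^∞(Ω_T)} ≤ C (1 + (‖u‖_{BMOₚ(Ω_T)} + ‖u‖_{L¹(Ω_T)}) (1 + log⁺ ‖u‖_{W₂^{2m,m}(Ω_T)})). -/

import Mathlib

open MeasureTheory Real
open scoped FourierTransform ENNReal

noncomputable section

/-- The model space for `ℝ^{n+1}`: generic point `z = (x, t)` where the spatial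
coordinates are `x i = z i.castSucc` (`i : Fin n`) and the time coordinate is
`t = z (Fin.last n)`. -/
abbrev PSpace (n : ℕ) := EuclideanSpace ℝ (Fin (n + 1))

/-- The parabolic distance `‖z‖ₚ = max (maxᵢ |xᵢ|) √|t|` from `z` to the origin. -/
def pnorm {n : ℕ} (z : PSpace n) : ℝ :=
  max (⨆ i : Fin n, |z i.castSucc|) (Real.sqrt |z (Fin.last n)|)

/-- The parabolic cube of radius `r` centered at `z₀`. -/
def pCube {n : ℕ} (z₀ : PSpace n) (r : ℝ) : Set (PSpace n) :=
  {z | pnorm (z - z₀) < r}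

/-- The set of mean oscillations `⨍_Q |u - u_Q|` of `u` over parabolic cubes `Q ⊆ O`. -/
def oscSet {n : ℕ} (O : Set (PSpace n)) (u : PSpace n → ℝ) : Set ℝ :=
  {v | ∃ z₀ r, 0 < r ∧ pCube z₀ r ⊆ O ∧
    v = ⨍ z in pCube z₀ r, |u z - ⨍ w in pCube z₀ r, u w|}

/-- The parabolic BMO norm of `u` over `O`. -/
def pBMO {n : ℕ} (O : Set (PSpace n)) (u : PSpace n → ℝ) : ℝ := sSup (oscSet O u)

/-- The set of quantities `inf_c ⨍_Q |u - c|` over parabolic cubes `Q ⊆ O`. -/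
def infOscSet {n : ℕ} (O : Set (PSpace n)) (u : PSpace n → ℝ) : Set ℝ :=
  {v | ∃ z₀ r, 0 < r ∧ pCube z₀ r ⊆ O ∧
    v = ⨅ c : ℝ, ⨍ z in pCube z₀ r, |u z - c|}

/-- Time derivative `D_t u`. -/
def Dt {n : ℕ} (u : PSpace n → ℝ) : PSpace n → ℝ :=
  fun z => fderiv ℝ u z (EuclideanSpace.single (Fin.last n) 1)

/-- Spatial derivative in direction `i`. -/
def Dx {n : ℕ} (i : Fin n) (u : PSpace n → ℝ) : PSpace n → ℝ :=
  fun z => fderiv ℝ u z (EuclideanSpace.single i.castSucc 1)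

/-- Spatial derivative `D_x^α` for a multi-index `α`. -/
def DxPow {n : ℕ} (α : Fin n → ℕ) (u : PSpace n → ℝ) : PSpace n → ℝ :=
  (List.finRange n).foldr (fun i v => (Dx i)^[α i] v) u

/-- The mixed derivative `D_t^r D_x^α u`. -/
def mixDeriv {n : ℕ} (r : ℕ) (α : Fin n → ℕ) (u : PSpace n → ℝ) : PSpace n → ℝ :=
  Dt^[r] (DxPow α u)

/-- The `L²(O)` norm. -/
def L2norm {n : ℕ} (O : Set (PSpace n)) (v : PSpace n → ℝ) : ℝ :=
  (eLpNorm v 2 (volume.restrict O)).toReal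

/-- The parabolic Sobolev norm `‖u‖_{W₂^{2m,m}(O)} = Σ_{2r+s ≤ 2m} Σ_{|α| = s}
‖D_t^r D_x^α u‖_{L²(O)}`. -/
def sobNorm {n : ℕ} (m : ℕ) (O : Set (PSpace n)) (u : PSpace n → ℝ) : ℝ :=
  ∑ p ∈ (Finset.range (2 * m + 1) ×ˢ Finset.range (2 * m + 1)).filter
      (fun p => 2 * p.1 + p.2 ≤ 2 * m),
    ∑ α ∈ Finset.Nat.antidiagonalTuple n p.2, L2norm O (mixDeriv p.1 α u)

/-- `log⁺ x = max (log x) 0`. -/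
def logPlus (x : ℝ) : ℝ := max (Real.log x) 0

/-- The domain `Ω_T = (0,1)ⁿ × (0,T)`. -/
def OmegaT (n : ℕ) (T : ℝ) : Set (PSpace n) :=
  {z | (∀ i : Fin n, z i.castSucc ∈ Set.Ioo (0 : ℝ) 1) ∧ z (Fin.last n) ∈ Set.Ioo 0 T}

/-- The anisotropic dilation `η^a z = (η x, η² t)` with `a = (1,…,1,2)`. -/
def pdil {n : ℕ} (η : ℝ) (z : PSpace n) : PSpace n :=
  (EuclideanSpace.equiv (Fin (n + 1)) ℝ).symm
    (fun i => if i = Fin.last n then η ^ 2 * z i else η * z i)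

/-- The anisotropic dyadic partition of unity `ψ_j` built from `ψ₀`:
`ψ_j z = ψ₀ (2^{-ja} z) - ψ₀ (2^{-(j-1)a} z)` for `j ≥ 1`. -/
def psiJ {n : ℕ} (ψ₀ : PSpace n → ℝ) : ℕ → PSpace n → ℝ
  | 0 => ψ₀
  | (j + 1) => fun z =>
      ψ₀ (pdil ((2 : ℝ) ^ (-((j : ℝ) + 1))) z) - ψ₀ (pdil ((2 : ℝ) ^ (-(j : ℝ))) z)

/-- `φ_j = 𝓕⁻¹ ψ_j`, the inverse Fourier transform of `ψ_j`. -/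
def phiJ {n : ℕ} (ψ₀ : PSpace n → ℝ) (j : ℕ) : PSpace n → ℂ :=
  𝓕⁻ (fun z => ((psiJ ψ₀ j z : ℝ) : ℂ))

/-- The convolution `(φ * u) z = ∫ φ (z - w) u w dw`. -/
def pconv {n : ℕ} (φ : PSpace n → ℂ) (u : PSpace n → ℝ) (z : PSpace n) : ℂ :=
  ∫ w, φ (z - w) * (u w : ℂ)

/-- The truncated Lizorkin–Triebel norm `‖u‖_{F̃⁰_{∞,1}} = ‖Σ_{j≥1} |φ_j * u|‖_∞`. -/
def F01norm {n : ℕ} (ψ₀ : PSpace n → ℝ) (u : PSpace n → ℝ) : ℝ :=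
  ⨆ z, ∑' j : ℕ, ‖pconv (phiJ ψ₀ (j + 1)) u z‖

/-- The truncated Lizorkin–Triebel norm `‖u‖_{F̃⁰_{∞,2}} = ‖(Σ_{j≥1} |φ_j * u|²)^{1/2}‖_∞`. -/
def F02norm {n : ℕ} (ψ₀ : PSpace n → ℝ) (u : PSpace n → ℝ) : ℝ :=
  ⨆ z, Real.sqrt (∑' j : ℕ, ‖pconv (phiJ ψ₀ (j + 1)) u z‖ ^ 2)

/-- The Lizorkin–Triebel norm `‖u‖_{F^γ_{∞,2}} = ‖(Σ_{j≥0} 2^{2γj} |φ_j * u|²)^{1/2}‖_∞`. -/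
def Fg2norm {n : ℕ} (ψ₀ : PSpace n → ℝ) (γ : ℝ) (u : PSpace n → ℝ) : ℝ :=
  ⨆ z, Real.sqrt (∑' j : ℕ, (2 : ℝ) ^ (2 * γ * j) * ‖pconv (phiJ ψ₀ j) u z‖ ^ 2)

/-- The anisotropic Besov quasi-norm `‖u‖_{B^s_{p,q}}`. -/
def besovNorm {n : ℕ} (ψ₀ : PSpace n → ℝ) (s : ℝ) (p q : ℝ≥0∞) (u : PSpace n → ℝ) : ℝ :=
  if q = ∞ then ⨆ j : ℕ, (2 : ℝ) ^ (s * j) * (eLpNorm (pconv (phiJ ψ₀ j) u) p volume).toReal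
  else (∑' j : ℕ, ((2 : ℝ) ^ (s * j) *
    (eLpNorm (pconv (phiJ ψ₀ j) u) p volume).toReal) ^ q.toReal) ^ (1 / q.toReal)

/-- The standing hypotheses on the cut-off function `ψ₀`: smooth, compactly supported,
equal to `1` on `{‖z‖ₚ ≤ 1}` and to `0` on `{‖z‖ₚ ≥ 2}`. -/
structure IsCutoff {n : ℕ} (ψ₀ : PSpace n → ℝ) : Prop where
  smooth : ContDiff ℝ (⊤ : ℕ∞) ψ₀
  compact_support : HasCompactSupport ψ₀
  eq_one : ∀ z, pnorm z ≤ 1 → ψ₀ z = 1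
  eq_zero : ∀ z, 2 ≤ pnorm z → ψ₀ z = 0

/-!
Let `A(D)` be the mean of `u` over the box with vertex `z` and signed edge lengths `D`, taken
against a product of polynomial kernels of high order. Under parabolic shrinking of `D` the boxes
contract to `z` and `A(D)` tends to `u z`. Three estimates are played against each other.

* Each kernel reproduces the value at the vertex up to a Peano remainder, so collapsing one edge
  changes `A(D)` by at most a mean of a pure derivative, of order `2 * m` in space or `m` in time.
  Cauchy-Schwarz bounds it by the Sobolev norm `W` times a power of the scale, which is positive
  exactly because `(n + 2) / 4 < m`. The steps therefore decay geometrically, and from the `N`-th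
  scale on the total change is `O(W / 2 ^ N)`.
* Down to the `N`-th scale, the mean of `|u|` grows by at most a multiple of the BMO norm per step.
* At the coarsest scale, the mean of `|u|` is controlled by the `L¹` norm.

Choosing `N` comparable to `1 + log⁺ W` makes the first contribution `O(1)` and the second
`O(‖u‖_{BMO} (1 + log⁺ W))`. Each point of the domain is a vertex of a parabolic box of a fixed
size inside the domain, so `u` need not be extended.
-/

/-! ### Mean oscillation along a chain of sets -/

section Oscillation

variable {α E : Type*} [MeasurableSpace α] {μ : Measure α} [NormedAddCommGroup E]
  {A B : Set α} {f : α → E}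

theorem average_norm_le [IsFiniteMeasure μ] [NeZero μ] (hf : Integrable f μ) (c : E) :
    ⨍ x, ‖f x‖ ∂μ ≤ ⨍ x, ‖f x - c‖ ∂μ + ‖c‖ := by
  have hfc : Integrable (fun x => ‖f x - c‖) μ := (hf.sub (integrable_const c)).norm
  rw [← average_const μ ‖c‖]
  simp only [average_eq, ← smul_add]
  rw [← integral_add hfc (integrable_const _)]
  refine smul_le_smul_of_nonneg_left ?_ (by positivity)
  exact integral_mono hf.norm (hfc.add (integrable_const _)) fun x => norm_le_norm_sub_add (f x) c

theorem setAverage_norm_le_eLpNorm {f : α → E} {O : Set α} (hAO : A ⊆ O) (hA : μ A ≠ 0)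
    (hA_top : μ A ≠ ∞) (hf : MemLp f 2 (μ.restrict O)) :
    ⨍ x in A, ‖f x‖ ∂μ ≤ √(μ.real A)⁻¹ * (eLpNorm f 2 (μ.restrict O)).toReal := by
  have hmeas : AEStronglyMeasurable f ((μ A)⁻¹ • μ.restrict A) :=
    (hf.1.mono_measure (Measure.restrict_mono_set μ hAO)).smul_measure _
  have : IsProbabilityMeasure ((μ A)⁻¹ • μ.restrict A) :=
    ⟨by simp [ENNReal.inv_mul_cancel hA hA_top]⟩
  have hle : eLpNorm f 1 ((μ A)⁻¹ • μ.restrict A) ≤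
      (μ A)⁻¹ ^ (1 / 2 : ℝ) * eLpNorm f 2 (μ.restrict O) := by
    refine (eLpNorm_le_eLpNorm_of_exponent_le one_le_two hmeas).trans ?_
    rw [eLpNorm_smul_measure_of_ne_top ENNReal.ofNat_ne_top, smul_eq_mul, ENNReal.toReal_div,
      ENNReal.toReal_one, ENNReal.toReal_ofNat]
    gcongr
  have hfin : (μ A)⁻¹ ^ (1 / 2 : ℝ) * eLpNorm f 2 (μ.restrict O) ≠ ∞ :=
    ENNReal.mul_ne_top (ENNReal.rpow_ne_top_of_nonneg (by positivity) (ENNReal.inv_ne_top.2 hA))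
      hf.2.ne
  rw [average_eq', Measure.restrict_apply_univ, integral_norm_eq_lintegral_enorm hmeas,
    ← eLpNorm_one_eq_lintegral_enorm]
  refine (ENNReal.toReal_mono hfin hle).trans_eq ?_
  rw [ENNReal.toReal_mul, ← ENNReal.toReal_rpow, ENNReal.toReal_inv, sqrt_eq_rpow,
    measureReal_def]

variable [NormedSpace ℝ E]

theorem norm_average_le {b : ℝ} (hb : 0 ≤ b) (h : ∀ᵐ x ∂μ, ‖f x‖ ≤ b) : ‖⨍ x, f x ∂μ‖ ≤ b := by
  have hmass : ((μ Set.univ)⁻¹ • μ).real Set.univ ≤ 1 := by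
    simpa [measureReal_def] using
      ENNReal.toReal_mono ENNReal.one_ne_top (ENNReal.inv_mul_le_one (μ Set.univ))
  rw [average_eq']
  refine (norm_integral_le_of_norm_le_const (Measure.ae_smul_measure h _)).trans ?_
  exact mul_le_of_le_one_right hb hmass

theorem average_norm_sub_average_le {b : ℝ} (hb : 0 ≤ b) (h : ∀ᵐ x ∂μ, ‖f x‖ ≤ b) :
    ⨍ x, ‖f x - ⨍ y, f y ∂μ‖ ∂μ ≤ 2 * b := by
  refine (le_norm_self _).trans (norm_average_le (by positivity) ?_)
  filter_upwards [h] with x hx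
  rw [norm_norm]
  linarith [norm_sub_le (f x) (⨍ y, f y ∂μ), norm_average_le hb h]

variable [CompleteSpace E]

theorem norm_setAverage_sub_le_of_subset {K : ℝ} (hAB : A ⊆ B) (hA : μ A ≠ 0) (hB : μ B ≠ ∞)
    (hK : μ.real B ≤ K * μ.real A) (hf : IntegrableOn f B μ) (c : E) :
    ‖⨍ x in A, f x ∂μ - c‖ ≤ K * ⨍ x in B, ‖f x - c‖ ∂μ := by
  have hA_top : μ A ≠ ∞ := measure_ne_top_of_subset hAB hB
  have hA_pos : 0 < μ.real A := ENNReal.toReal_pos hA hA_top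
  have hB_pos : 0 < μ.real B := hA_pos.trans_le (measureReal_mono hAB hB)
  have hfc : IntegrableOn (fun x => f x - c) B μ := hf.sub (integrableOn_const hB)
  have : 0 ≤ ∫ x in B, ‖f x - c‖ ∂μ := integral_nonneg fun _ => norm_nonneg _
  have hsub : ⨍ x in A, f x ∂μ - c = (μ.real A)⁻¹ • ∫ x in A, (f x - c) ∂μ := by
    rw [integral_sub (hf.mono_set hAB) (integrableOn_const hA_top), setIntegral_const,
      setAverage_eq, smul_sub, inv_smul_smul₀ hA_pos.ne']
  calc ‖⨍ x in A, f x ∂μ - c‖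
      ≤ (μ.real A)⁻¹ * ∫ x in A, ‖f x - c‖ ∂μ := by
        rw [hsub, norm_smul, norm_of_nonneg (inv_nonneg.2 hA_pos.le)]
        gcongr
        exact norm_integral_le_integral_norm _
    _ ≤ (μ.real A)⁻¹ * ∫ x in B, ‖f x - c‖ ∂μ := by
        gcongr
        · exact ae_of_all _ fun _ => norm_nonneg _
        · exact hfc.norm
    _ ≤ (K * (μ.real B)⁻¹) * ∫ x in B, ‖f x - c‖ ∂μ := by
        gcongr
        rwa [inv_le_iff_one_le_mul₀ hA_pos, mul_right_comm, ← div_eq_mul_inv, one_le_div hB_pos]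
    _ = K * ⨍ x in B, ‖f x - c‖ ∂μ := by rw [setAverage_eq, smul_eq_mul, mul_assoc]

/-- Each of the `N` steps of the chain moves the average by at most `K * b`. -/
theorem setAverage_norm_le_of_antitone {Q : ℕ → Set α} {K b : ℝ} (hQ : Antitone Q)
    (hQ_ne : ∀ j, μ (Q j) ≠ 0) (hQ_top : μ (Q 0) ≠ ∞) (hf : IntegrableOn f (Q 0) μ)
    (hK : ∀ j, μ.real (Q j) ≤ K * μ.real (Q (j + 1)))
    (hb : ∀ j, ⨍ x in Q j, ‖f x - ⨍ y in Q j, f y ∂μ‖ ∂μ ≤ b) (N : ℕ) :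
    ⨍ x in Q N, ‖f x‖ ∂μ ≤ b + ⨍ x in Q 0, ‖f x‖ ∂μ + N * (K * b) := by
  have hQj_top (j : ℕ) : μ (Q j) ≠ ∞ := measure_ne_top_of_subset (hQ (Nat.zero_le j)) hQ_top
  have hfj (j : ℕ) : IntegrableOn f (Q j) μ := hf.mono_set (hQ (Nat.zero_le j))
  have hK_nonneg : 0 ≤ K := by
    have := ENNReal.toReal_pos (hQ_ne 1) (hQj_top 1)
    exact (pos_of_mul_pos_left ((ENNReal.toReal_pos (hQ_ne 0) hQ_top).trans_le (hK 0)) this.le).le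
  have hstep (j : ℕ) : ‖⨍ x in Q (j + 1), f x ∂μ‖ ≤ ‖⨍ x in Q j, f x ∂μ‖ + K * b := by
    have := norm_setAverage_sub_le_of_subset (hQ (Nat.le_add_right j 1)) (hQ_ne _) (hQj_top j)
      (hK j) (hfj j) (⨍ x in Q j, f x ∂μ)
    have := mul_le_mul_of_nonneg_left (hb j) hK_nonneg
    linarith [norm_le_norm_add_norm_sub' (⨍ x in Q (j + 1), f x ∂μ) (⨍ x in Q j, f x ∂μ)]
  have hmean : ‖⨍ x in Q N, f x ∂μ‖ ≤ ⨍ x in Q 0, ‖f x‖ ∂μ + N * (K * b) := by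
    induction N with
    | zero =>
      have := norm_setAverage_sub_le_of_subset subset_rfl (hQ_ne 0) hQ_top (one_mul _).ge hf 0
      simpa using this
    | succ N ih =>
      push_cast
      linarith [hstep N]
  have : IsFiniteMeasure (μ.restrict (Q N)) := isFiniteMeasure_restrict.2 (hQj_top N)
  have : NeZero (μ.restrict (Q N)) := ⟨Measure.restrict_eq_zero.not.2 (hQ_ne N)⟩
  linarith [hb N, average_norm_le (hfj N) (⨍ x in Q N, f x ∂μ)]

end Oscillation

/-! ### A one-dimensional kernel reproducing the value at an endpoint -/

section VertexKernel

open Polynomial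
open scoped Nat

theorem eval_iterate_derivative_eq_zero_of_pow_dvd {R : Type*} [CommRing R] {p q : R[X]} {a : R}
    {j k : ℕ} (hq : q.eval a = 0) (hqp : q ^ k ∣ p) (hjk : j < k) :
    (derivative^[j] p).eval a = 0 := by
  have h := pow_sub_dvd_iterate_derivative_of_pow_dvd j hqp
  exact eval_eq_zero_of_dvd_of_eval_eq_zero ((dvd_pow_self q (by lia)).trans h) hq

/-- The polynomial `X ^ (M - 1) * (1 - X) ^ M / (M - 1)!`. Up to a sign it is the Peano kernel of
the error functional `f ↦ ∫ t in 0..1, (vertexKernel M).eval t * f t - f 0`. -/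
def peanoKernel (M : ℕ) : ℝ[X] :=
  C ((M - 1)! : ℝ)⁻¹ * (X ^ (M - 1) * (1 - X) ^ M)

/-- The kernel of order `M`: integration against it over `[0, 1]` reproduces the value at `0` of
every polynomial of degree less than `M`. -/
def vertexKernel (M : ℕ) : ℝ[X] :=
  -derivative^[M] (peanoKernel M)

theorem eval_one_iterate_derivative_peanoKernel {M j : ℕ} (hj : j < M) :
    (derivative^[j] (peanoKernel M)).eval 1 = 0 :=
  eval_iterate_derivative_eq_zero_of_pow_dvd (q := 1 - X) (by simp)
    ((dvd_mul_left _ _).trans (dvd_mul_left _ _)) hj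

theorem eval_zero_iterate_derivative_peanoKernel {M j : ℕ} (hj : j < M - 1) :
    (derivative^[j] (peanoKernel M)).eval 0 = 0 :=
  eval_iterate_derivative_eq_zero_of_pow_dvd (q := X) (by simp)
    ((dvd_mul_right _ _).trans (dvd_mul_left _ _)) hj

theorem eval_zero_iterate_derivative_pred_peanoKernel (M : ℕ) :
    (derivative^[M - 1] (peanoKernel M)).eval 0 = 1 := by
  have hcoeff : (peanoKernel M).coeff (M - 1) = ((M - 1)! : ℝ)⁻¹ := by
    simp [peanoKernel, coeff_X_pow_mul', coeff_zero_eq_eval_zero]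
  rw [← coeff_zero_eq_eval_zero, coeff_iterate_derivative, zero_add, hcoeff,
    Nat.descFactorial_self, nsmul_eq_mul,
    mul_inv_cancel₀ (Nat.cast_ne_zero.2 (M - 1).factorial_ne_zero)]

theorem abs_eval_peanoKernel_le_one (M : ℕ) {t : ℝ} (ht : t ∈ Set.Icc (0 : ℝ) 1) :
    |(peanoKernel M).eval t| ≤ 1 := by
  have ht' : 1 - t ∈ Set.Icc (0 : ℝ) 1 := Set.Icc.one_sub_mem ht
  have hfact : ((M - 1)! : ℝ)⁻¹ ∈ Set.Icc (0 : ℝ) 1 :=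
    ⟨by positivity, inv_le_one_of_one_le₀ (mod_cast (M - 1).factorial_pos)⟩
  have h := unitInterval.mul_mem hfact (unitInterval.mul_mem
    (unitInterval.submonoid.pow_mem ht (M - 1)) (unitInterval.submonoid.pow_mem ht' M))
  have heval : (peanoKernel M).eval t = ((M - 1)! : ℝ)⁻¹ * (t ^ (M - 1) * (1 - t) ^ M) := by
    simp [peanoKernel]
  rw [heval, abs_of_nonneg h.1]
  exact h.2

theorem integral_derivative_eval_mul (p : ℝ[X]) {f f' : ℝ → ℝ}
    (hf : ∀ t ∈ Set.Icc (0 : ℝ) 1, HasDerivAt f (f' t) t) (hf' : ContinuousOn f' (Set.Icc 0 1)) :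
    ∫ t in 0..1, p.derivative.eval t * f t =
      p.eval 1 * f 1 - p.eval 0 * f 0 - ∫ t in 0..1, p.eval t * f' t := by
  rw [← Set.uIcc_of_le zero_le_one] at hf hf'
  simpa only [mul_comm (f _), mul_comm (f' _)] using
    intervalIntegral.integral_mul_deriv_eq_deriv_mul hf (fun t _ => p.hasDerivAt t)
      hf'.intervalIntegrable (p.derivative.continuous.intervalIntegrable _ _)

theorem integral_iterate_derivative_eval_mul (p : ℝ[X]) (k : ℕ) {f : ℕ → ℝ → ℝ}
    (hp₀ : ∀ j < k, (derivative^[j] p).eval 0 = 0) (hp₁ : ∀ j < k, (derivative^[j] p).eval 1 = 0)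
    (hf : ∀ j < k, ∀ t ∈ Set.Icc (0 : ℝ) 1, HasDerivAt (f j) (f (j + 1) t) t)
    (hfk : ContinuousOn (f k) (Set.Icc 0 1)) :
    ∫ t in 0..1, (derivative^[k] p).eval t * f 0 t =
      (-1) ^ k * ∫ t in 0..1, p.eval t * f k t := by
  induction k generalizing f with
  | zero => simp
  | succ k ih =>
    have hf₁ : ContinuousOn (f 1) (Set.Icc 0 1) := by
      rcases k with - | k
      · exact hfk
      · exact fun t ht => (hf 1 (by lia) t ht).continuousAt.continuousWithinAt
    have hk := ih (f := fun j => f (j + 1)) (fun j hj => hp₀ j (by lia))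
      (fun j hj => hp₁ j (by lia)) (fun j hj => hf (j + 1) (by lia)) hfk
    rw [Function.iterate_succ_apply', integral_derivative_eval_mul _ (hf 0 k.succ_pos) hf₁,
      hp₀ k k.lt_succ_self, hp₁ k k.lt_succ_self, hk]
    ring

variable {M : ℕ}

theorem integral_vertexKernel_mul_sub (hM : 0 < M) {f : ℕ → ℝ → ℝ}
    (hf : ∀ j < M, ∀ t ∈ Set.Icc (0 : ℝ) 1, HasDerivAt (f j) (f (j + 1) t) t)
    (hfM : ContinuousOn (f M) (Set.Icc 0 1)) :
    (∫ t in 0..1, (vertexKernel M).eval t * f 0 t) - f 0 0 =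
      (-1) ^ (M - 1) * ∫ t in 0..1, (peanoKernel M).eval t * f M t := by
  obtain ⟨k, rfl⟩ : ∃ k, M = k + 1 := ⟨M - 1, by lia⟩
  have hf₁ : ContinuousOn (f 1) (Set.Icc 0 1) := by
    rcases k with - | k
    · exact hfM
    · exact fun t ht => (hf 1 (by lia) t ht).continuousAt.continuousWithinAt
  have hk := integral_iterate_derivative_eval_mul (peanoKernel (k + 1)) k
    (f := fun j => f (j + 1)) (fun j hj => eval_zero_iterate_derivative_peanoKernel hj)
    (fun j hj => eval_one_iterate_derivative_peanoKernel (by lia))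
    (fun j hj => hf (j + 1) (by lia)) hfM
  have hval := eval_zero_iterate_derivative_pred_peanoKernel (k + 1)
  rw [Nat.add_sub_cancel] at hval ⊢
  simp only [vertexKernel, eval_neg, neg_mul, intervalIntegral.integral_neg,
    Function.iterate_succ_apply']
  rw [integral_derivative_eval_mul _ (hf 0 k.succ_pos) hf₁, hk, hval,
    eval_one_iterate_derivative_peanoKernel k.lt_succ_self]
  ring

theorem abs_integral_vertexKernel_mul_sub_le (hM : 0 < M) {f : ℕ → ℝ → ℝ}
    (hf : ∀ j < M, ∀ t ∈ Set.Icc (0 : ℝ) 1, HasDerivAt (f j) (f (j + 1) t) t)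
    (hfM : ContinuousOn (f M) (Set.Icc 0 1)) :
    |(∫ t in 0..1, (vertexKernel M).eval t * f 0 t) - f 0 0| ≤ ∫ t in 0..1, |f M t| := by
  rw [integral_vertexKernel_mul_sub hM hf hfM, abs_mul, abs_neg_one_pow, one_mul]
  refine (intervalIntegral.abs_integral_le_integral_abs zero_le_one).trans ?_
  have hfM' : ContinuousOn (f M) (Set.uIcc 0 1) := by rwa [Set.uIcc_of_le zero_le_one]
  have hp := (peanoKernel M).continuous.continuousOn (s := Set.uIcc 0 1)
  refine intervalIntegral.integral_mono_on zero_le_one (hp.mul hfM').abs.intervalIntegrable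
    hfM'.abs.intervalIntegrable fun t ht => ?_
  rw [abs_mul]
  exact mul_le_of_le_one_left (abs_nonneg _) (abs_eval_peanoKernel_le_one M ht)

theorem integral_vertexKernel (hM : 0 < M) : ∫ t in 0..1, (vertexKernel M).eval t = 1 := by
  have h := integral_vertexKernel_mul_sub hM (f := fun j _ => if j = 0 then 1 else 0)
    (fun j _ t _ => by simpa using hasDerivAt_const t _) continuousOn_const
  simpa [hM.ne', sub_eq_zero] using h

theorem exists_forall_abs_eval_vertexKernel_le {ι : Type*} [Finite ι] (M : ι → ℕ) :
    ∃ C, 1 ≤ C ∧ ∀ i, ∀ t ∈ Set.Icc (0 : ℝ) 1, |(vertexKernel (M i)).eval t| ≤ C := by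
  choose C hC using fun i => isCompact_Icc.exists_bound_of_continuousOn
    (s := Set.Icc (0 : ℝ) 1) (vertexKernel (M i)).continuous.continuousOn
  obtain ⟨B, hB⟩ := (Set.finite_range C).bddAbove
  exact ⟨max 1 B, le_max_left _ _, fun i t ht =>
    (hC i t ht).trans ((hB (Set.mem_range_self i)).trans (le_max_right _ _))⟩

end VertexKernel

/-! ### Boxes with a marked vertex -/

section VertexBox

open unitInterval Function

variable {ι : Type*}

/-- The affine parametrization by the unit cube of the box with vertex `z` and signed edge
lengths `D`. -/
def vertexBoxMap (z : EuclideanSpace ℝ ι) (D : ι → ℝ) (y : ι → I) : EuclideanSpace ℝ ι :=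
  z + WithLp.toLp 2 fun i => D i * y i

/-- The closed box with vertex `z` and signed edge lengths `D`; the vertex opposite to `z` is
`z + D`. -/
def vertexBox (z : EuclideanSpace ℝ ι) (D : ι → ℝ) : Set (EuclideanSpace ℝ ι) :=
  Set.range (vertexBoxMap z D)

variable {z : EuclideanSpace ℝ ι} {D : ι → ℝ}

@[simp]
theorem vertexBoxMap_apply (y : ι → I) (i : ι) : vertexBoxMap z D y i = z i + D i * y i :=
  rfl

@[simp]
theorem vertexBoxMap_zero (z : EuclideanSpace ℝ ι) (y : ι → I) : vertexBoxMap z 0 y = z := by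
  ext i; simp

theorem vertexBoxMap_mem (z : EuclideanSpace ℝ ι) (D : ι → ℝ) (y : ι → I) :
    vertexBoxMap z D y ∈ vertexBox z D :=
  Set.mem_range_self y

theorem vertexBoxMap_mul (s y : ι → I) :
    vertexBoxMap z (fun i => D i * s i) y = vertexBoxMap z D (s * y) := by
  ext i; simp [mul_assoc]

theorem mem_vertexBox_iff {x : EuclideanSpace ℝ ι} :
    x ∈ vertexBox z D ↔ ∀ i, x i ∈ Set.uIcc (z i) (z i + D i) := by
  have huIcc (i : ι) : x i ∈ Set.uIcc (z i) (z i + D i) ↔ ∃ t : I, z i + D i * t = x i := by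
    rw [← segment_eq_uIcc, segment_eq_image']
    simp [mul_comm]
  simp only [huIcc, Classical.skolem, vertexBox, Set.mem_range]
  exact exists_congr fun y => ⟨fun h i => by simp [← h], fun h => by ext i; simp [h]⟩

theorem vertexBox_mono {D' : ι → ℝ} (h : ∀ i, D' i ∈ Set.uIcc 0 (D i)) :
    vertexBox z D' ⊆ vertexBox z D := by
  intro x hx
  rw [mem_vertexBox_iff] at hx ⊢
  refine fun i => Set.uIcc_subset_uIcc Set.left_mem_uIcc ?_ (hx i)
  simpa only [Set.image_const_add_uIcc, add_zero] using Set.mem_image_of_mem (z i + ·) (h i)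

theorem vertexBox_update_zero_subset [DecidableEq ι] (z : EuclideanSpace ℝ ι) (D : ι → ℝ)
    (i : ι) : vertexBox z (update D i 0) ⊆ vertexBox z D := by
  refine vertexBox_mono fun j => ?_
  rcases eq_or_ne j i with rfl | hj
  · simp
  · simp [hj]

theorem vertexBoxMap_update [DecidableEq ι] (z : EuclideanSpace ℝ ι) (D : ι → ℝ) (y : ι → I)
    (i : ι) (t : I) :
    vertexBoxMap z D (update y i t) =
      vertexBoxMap z (update D i 0) y + (D i * t) • EuclideanSpace.single i (1 : ℝ) := by
  ext j
  rcases eq_or_ne j i with rfl | hj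
  · simp
  · simp [hj]

theorem vertexBoxMap_update_zero_update [DecidableEq ι] (z : EuclideanSpace ℝ ι) (D : ι → ℝ)
    (y : ι → I) (i : ι) (t : I) :
    vertexBoxMap z (update D i 0) (update y i t) = vertexBoxMap z (update D i 0) y := by
  simp [vertexBoxMap_update]

@[fun_prop]
theorem continuous_vertexBoxMap (z : EuclideanSpace ℝ ι) (D : ι → ℝ) :
    Continuous (vertexBoxMap z D) :=
  (PiLp.continuous_toLp 2 _).comp
    (by fun_prop : Continuous fun (y : ι → I) i => z i + D i * (y i : ℝ))

theorem isCompact_vertexBox (z : EuclideanSpace ℝ ι) (D : ι → ℝ) : IsCompact (vertexBox z D) :=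
  isCompact_range (continuous_vertexBoxMap z D)

theorem continuous_comp_vertexBoxMap {X : Type*} [TopologicalSpace X]
    {f : EuclideanSpace ℝ ι → X} (hf : ContinuousOn f (vertexBox z D)) :
    Continuous fun y => f (vertexBoxMap z D y) :=
  hf.comp_continuous (by fun_prop) (vertexBoxMap_mem z D)

variable [Fintype ι]

theorem map_coe_volume_unitCube :
    Measure.map (fun (y : ι → I) i => (y i : ℝ)) volume =
      volume.restrict (Set.univ.pi fun _ => Set.Icc 0 1) := by
  rw [volume_pi, volume_pi, Measure.restrict_pi_pi]
  exact (measurePreserving_pi _ _ fun _ => measurePreserving_coe).map_eq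

theorem map_affine_volume [DecidableEq ι] (z : EuclideanSpace ℝ ι) (hD : ∀ i, D i ≠ 0) :
    Measure.map (fun y => z + WithLp.toLp 2 (Matrix.toLin' (Matrix.diagonal D) y)) volume =
      (ENNReal.ofReal (∏ i, |D i|))⁻¹ • volume := by
  have hdet : (Matrix.diagonal D).det ≠ 0 := by
    simpa [Matrix.det_diagonal] using Finset.prod_ne_zero_iff.2 fun i _ => hD i
  have hpos : 0 < ∏ i, |D i| := Finset.prod_pos fun i _ => abs_pos.2 (hD i)
  have hdiag : Measure.map (Matrix.toLin' (Matrix.diagonal D)) volume =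
      (ENNReal.ofReal (∏ i, |D i|))⁻¹ • volume := by
    have h := smul_map_diagonal_volume_pi hdet
    rw [Matrix.det_diagonal, Finset.abs_prod] at h
    conv_rhs => rw [← h]
    rw [smul_smul, ENNReal.inv_mul_cancel (by simpa using hpos) ENNReal.ofReal_ne_top, one_smul]
  have hmp := (measurePreserving_add_left volume z).comp (PiLp.volume_preserving_toLp ι)
  have hlin : Measurable (Matrix.toLin' (Matrix.diagonal D)) :=
    (LinearMap.continuous_of_finiteDimensional _).measurable
  change Measure.map (((z + ·) ∘ WithLp.toLp 2) ∘ Matrix.toLin' (Matrix.diagonal D)) volume = _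
  rw [← Measure.map_map hmp.measurable hlin, hdiag, Measure.map_smul, hmp.map_eq]

theorem map_vertexBoxMap (z : EuclideanSpace ℝ ι) (hD : ∀ i, D i ≠ 0) :
    Measure.map (vertexBoxMap z D) volume =
      (ENNReal.ofReal (∏ i, |D i|))⁻¹ • volume.restrict (vertexBox z D) := by
  classical
  set A : (ι → ℝ) → EuclideanSpace ℝ ι :=
    fun y => z + WithLp.toLp 2 (Matrix.toLin' (Matrix.diagonal D) y) with hA
  have hA_apply (y : ι → ℝ) : A y = z + WithLp.toLp 2 fun i => D i * y i := by
    ext i; simp [hA, Matrix.mulVec_diagonal]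
  have hA_emb : MeasurableEmbedding A := by
    refine Continuous.measurableEmbedding (by simp only [funext hA_apply]; fun_prop) ?_
    intro y y' h
    ext i
    simpa [hA_apply, hD i] using congrArg (· i) h
  have hA_image : A '' (Set.univ.pi fun _ => Set.Icc 0 1) = vertexBox z D := by
    ext x
    constructor
    · rintro ⟨y, hy, rfl⟩
      exact ⟨fun i => ⟨y i, hy i trivial⟩, (hA_apply y).symm⟩
    · rintro ⟨y, rfl⟩
      exact ⟨fun i => y i, fun i _ => (y i).2, hA_apply _⟩
  have hcomp : vertexBoxMap z D = A ∘ fun y i => (y i : ℝ) := funext fun y => (hA_apply _).symm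
  rw [hcomp, ← Measure.map_map hA_emb.measurable (by fun_prop), map_coe_volume_unitCube,
    ← hA_image, ← Measure.restrict_smul, ← map_affine_volume z hD, hA_emb.restrict_map,
    Set.preimage_image_eq _ hA_emb.injective]

theorem volume_vertexBox (z : EuclideanSpace ℝ ι) (hD : ∀ i, D i ≠ 0) :
    volume (vertexBox z D) = ENNReal.ofReal (∏ i, |D i|) := by
  have h := congrArg (· Set.univ) (map_vertexBoxMap z hD)
  have hpos : 0 < ∏ i, |D i| := Finset.prod_pos fun i _ => abs_pos.2 (hD i)
  simp only [Measure.map_apply (continuous_vertexBoxMap z D).measurable MeasurableSet.univ,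
    Set.preimage_univ, measure_univ, Measure.smul_apply, Measure.restrict_apply_univ,
    smul_eq_mul] at h
  rw [← mul_one (ENNReal.ofReal _), h, ENNReal.mul_inv_cancel_left (by simpa using hpos)
    ENNReal.ofReal_ne_top]

theorem volume_real_vertexBox (z : EuclideanSpace ℝ ι) (hD : ∀ i, D i ≠ 0) :
    volume.real (vertexBox z D) = ∏ i, |D i| := by
  rw [measureReal_def, volume_vertexBox z hD,
    ENNReal.toReal_ofReal (Finset.prod_nonneg fun _ _ => abs_nonneg _)]

theorem integral_comp_vertexBoxMap (hD : ∀ i, D i ≠ 0) {f : EuclideanSpace ℝ ι → ℝ}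
    (hf : ContinuousOn f (vertexBox z D)) :
    ∫ y, f (vertexBoxMap z D y) = ⨍ x in vertexBox z D, f x := by
  have hf' := hf.aestronglyMeasurable (μ := volume) (isCompact_vertexBox z D).measurableSet
  rw [average_eq', Measure.restrict_apply_univ, volume_vertexBox z hD, ← map_vertexBoxMap z hD,
    integral_map (by fun_prop)]
  rw [map_vertexBoxMap z hD]
  exact hf'.smul_measure _

end VertexBox

/-! ### Integrating out one coordinate -/

section Update

open Function

variable {ι : Type*} [Fintype ι] [DecidableEq ι] {X : ι → Type*} [∀ i, MeasurableSpace (X i)]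
  (μ : ∀ i, Measure (X i)) [∀ i, IsProbabilityMeasure (μ i)]

theorem measurePreserving_update (i : ι) :
    MeasurePreserving (fun p : X i × (∀ j, X j) => update p.2 i p.1)
      ((μ i).prod (Measure.pi μ)) (Measure.pi μ) := by
  have hmeas : Measurable fun p : X i × (∀ j, X j) => update p.2 i p.1 :=
    measurable_update'.comp measurable_swap
  refine ⟨hmeas, (Measure.pi_eq fun s hs => ?_).symm⟩
  have hpre : (fun p : X i × (∀ j, X j) => update p.2 i p.1) ⁻¹' Set.univ.pi s =
      s i ×ˢ Set.univ.pi (update s i Set.univ) := by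
    ext ⟨t, y⟩
    simp only [Set.mem_preimage, Set.mem_univ_pi, Set.mem_prod, forall_update_iff,
      forall_update_iff s fun j A => y j ∈ A]
    simp [Set.mem_univ]
  rw [Measure.map_apply hmeas (.univ_pi hs), hpre, Measure.prod_prod, Measure.pi_pi,
    ← Finset.mul_prod_erase _ _ (Finset.mem_univ i),
    ← Finset.mul_prod_erase _ _ (Finset.mem_univ i),
    update_self, measure_univ, one_mul]
  congr 1
  exact Finset.prod_congr rfl fun j hj => by rw [update_of_ne (Finset.ne_of_mem_erase hj)]

variable {E : Type*} [NormedAddCommGroup E] {f : (∀ i, X i) → E}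

theorem integrable_prod_update (hf : Integrable f (Measure.pi μ)) (i : ι) :
    Integrable (fun p : X i × (∀ j, X j) => f (update p.2 i p.1)) ((μ i).prod (Measure.pi μ)) :=
  (measurePreserving_update μ i).integrable_comp_of_integrable hf

variable [NormedSpace ℝ E]

theorem integral_pi_eq_integral_integral_update (hf : Integrable f (Measure.pi μ)) (i : ι) :
    ∫ y, f y ∂(Measure.pi μ) = ∫ y, ∫ t, f (update y i t) ∂(μ i) ∂(Measure.pi μ) := by
  have hmp := measurePreserving_update μ i
  rw [← integral_prod_symm _ (integrable_prod_update μ hf i)]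
  conv_lhs => rw [← hmp.map_eq]
  exact integral_map hmp.measurable.aemeasurable (hmp.map_eq.symm ▸ hf.1)

theorem norm_integral_pi_le_of_update {F : Type*} [NormedAddCommGroup F] {g : (∀ i, X i) → F}
    (hf : Integrable f (Measure.pi μ)) (hg : Integrable g (Measure.pi μ)) (i : ι) (C : ℝ)
    (h : ∀ y, ‖∫ t, f (update y i t) ∂(μ i)‖ ≤ C * ∫ t, ‖g (update y i t)‖ ∂(μ i)) :
    ‖∫ y, f y ∂(Measure.pi μ)‖ ≤ C * ∫ y, ‖g y‖ ∂(Measure.pi μ) := by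
  rw [integral_pi_eq_integral_integral_update μ hf i,
    integral_pi_eq_integral_integral_update μ hg.norm i, ← integral_const_mul]
  exact norm_integral_le_of_norm_le
    ((integrable_prod_update μ hg.norm i).integral_prod_right.const_mul C) (ae_of_all _ h)

end Update

/-! ### Directional derivatives along a segment -/

section DirDeriv

variable {E F : Type*} [NormedAddCommGroup E] [NormedSpace ℝ E] [NormedAddCommGroup F]
  [NormedSpace ℝ F]

/-- The derivative of `u` in the direction `v`, as an operator on functions that can be
iterated. -/
def dirDeriv (v : E) (u : E → F) (x : E) : F :=
  fderiv ℝ u x v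

variable {u : E → F} {V : Set E}

theorem contDiffOn_iterate_dirDeriv (v : E) (hV : IsOpen V) {j k : ℕ}
    (hu : ContDiffOn ℝ (j + k : ℕ) u V) : ContDiffOn ℝ k ((dirDeriv v)^[j] u) V := by
  induction j generalizing u with
  | zero => simpa using hu
  | succ j ih =>
    refine ih ((hu.fderiv_of_isOpen hV ?_).clm_apply contDiffOn_const)
    exact_mod_cast (by lia : j + k + 1 ≤ j + 1 + k)

theorem hasDerivAt_iterate_dirDeriv_line (hV : IsOpen V) {j k : ℕ} (hu : ContDiffOn ℝ k u V)
    (hjk : j < k) {p v : E} {c t : ℝ} (ht : p + (c * t) • v ∈ V) :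
    HasDerivAt (fun s => c ^ j • (dirDeriv v)^[j] u (p + (c * s) • v))
      (c ^ (j + 1) • (dirDeriv v)^[j + 1] u (p + (c * t) • v)) t := by
  have hdiff : DifferentiableAt ℝ ((dirDeriv v)^[j] u) (p + (c * t) • v) :=
    (contDiffOn_iterate_dirDeriv v hV (k := 1) (hu.of_le (mod_cast hjk))).contDiffAt
      (hV.mem_nhds ht) |>.differentiableAt one_ne_zero
  have hline : HasDerivAt (fun s => p + (c * s) • v) (c • v) t := by
    simpa using (((hasDerivAt_id t).const_mul c).smul_const v).const_add p
  have h := (hdiff.hasFDerivAt.comp_hasDerivAt t hline).const_smul (c ^ j)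
  rw [map_smul, smul_smul, ← pow_succ] at h
  rw [Function.iterate_succ_apply']
  exact h

theorem continuousOn_iterate_dirDeriv (v : E) (hV : IsOpen V) {j : ℕ} (hu : ContDiffOn ℝ j u V) :
    ContinuousOn ((dirDeriv v)^[j] u) V :=
  (contDiffOn_iterate_dirDeriv v hV (k := 0) hu).continuousOn

theorem abs_integral_vertexKernel_mul_line_sub_le {u : E → ℝ} {M : ℕ} (hM : 0 < M)
    (hV : IsOpen V) (hu : ContDiffOn ℝ M u V) {p v : E} {c : ℝ}
    (hmem : ∀ t ∈ Set.Icc (0 : ℝ) 1, p + (c * t) • v ∈ V) :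
    |(∫ t in 0..1, (vertexKernel M).eval t * u (p + (c * t) • v)) - u p| ≤
      |c| ^ M * ∫ t in 0..1, |(dirDeriv v)^[M] u (p + (c * t) • v)| := by
  have hcont : ContinuousOn (fun t => (dirDeriv v)^[M] u (p + (c * t) • v)) (Set.Icc 0 1) :=
    (continuousOn_iterate_dirDeriv v hV hu).comp (by fun_prop) hmem
  have h := abs_integral_vertexKernel_mul_sub_le hM
    (f := fun j t => c ^ j • (dirDeriv v)^[j] u (p + (c * t) • v))
    (fun j hj t ht => hasDerivAt_iterate_dirDeriv_line hV hu hj (hmem t ht))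
    (by fun_prop)
  simpa [abs_mul] using h

end DirDeriv

/-! ### Kernel means over boxes -/

section KernelMean

open unitInterval Function

theorem integral_unitInterval_coe {E : Type*} [NormedAddCommGroup E] [NormedSpace ℝ E]
    (f : ℝ → E) : ∫ t : I, f t = ∫ t in 0..1, f t := by
  rw [measurePreserving_coe.integral_comp (MeasurableEmbedding.subtype_coe measurableSet_Icc),
    integral_Icc_eq_integral_Ioc, intervalIntegral.integral_of_le zero_le_one]

theorem abs_prod_eval_vertexKernel_le {ι : Type*} {M : ι → ℕ} {B : ℝ}
    (hM : ∀ i, ∀ t ∈ Set.Icc (0 : ℝ) 1, |(vertexKernel (M i)).eval t| ≤ B) (S : Finset ι)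
    (y : ι → I) : |∏ i ∈ S, (vertexKernel (M i)).eval (y i : ℝ)| ≤ B ^ S.card := by
  rw [Finset.abs_prod]
  exact (Finset.prod_le_prod (fun _ _ => abs_nonneg _) fun i _ => hM i _ (y i).2).trans_eq
    (Finset.prod_const B)

variable {ι : Type*} [Fintype ι]

/-- The product kernel on the unit cube whose `i`-th factor has order `M i`. -/
def productKernel (M : ι → ℕ) (y : ι → I) : ℝ :=
  ∏ i, (vertexKernel (M i)).eval (y i : ℝ)

/-- The mean of `u` over the box with vertex `z` and signed edge lengths `D`, weighted by the
product kernel. It approximates `u z` to order `M i` in the `i`-th edge length. -/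
def kernelMean (M : ι → ℕ) (u : EuclideanSpace ℝ ι → ℝ) (z : EuclideanSpace ℝ ι) (D : ι → ℝ) : ℝ :=
  ∫ y, productKernel M y * u (vertexBoxMap z D y)

variable {M : ι → ℕ} {B : ℝ} {u : EuclideanSpace ℝ ι → ℝ} {z : EuclideanSpace ℝ ι} {D : ι → ℝ}

@[fun_prop]
theorem continuous_productKernel (M : ι → ℕ) : Continuous (productKernel M) := by
  unfold productKernel
  fun_prop

theorem abs_productKernel_le
    (hM : ∀ i, ∀ t ∈ Set.Icc (0 : ℝ) 1, |(vertexKernel (M i)).eval t| ≤ B) (y : ι → I) :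
    |productKernel M y| ≤ B ^ Fintype.card ι :=
  abs_prod_eval_vertexKernel_le hM Finset.univ y

theorem integral_productKernel (hM : ∀ i, 0 < M i) : ∫ y, productKernel M y = 1 := by
  simp only [productKernel]
  rw [integral_fintype_prod_volume_eq_prod fun i (t : I) => (vertexKernel (M i)).eval (t : ℝ)]
  exact Finset.prod_eq_one fun i _ =>
    (integral_unitInterval_coe _).trans (integral_vertexKernel (hM i))

theorem kernelMean_zero (hM : ∀ i, 0 < M i) (u : EuclideanSpace ℝ ι → ℝ)
    (z : EuclideanSpace ℝ ι) : kernelMean M u z 0 = u z := by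
  simp [kernelMean, integral_mul_const, integral_productKernel hM]

theorem abs_kernelMean_le {K : ℝ} (hK : ∀ y, |productKernel M y| ≤ K)
    (hu : ContinuousOn u (vertexBox z D)) :
    |kernelMean M u z D| ≤ K * ∫ y, |u (vertexBoxMap z D y)| := by
  have hint : Integrable fun y => |u (vertexBoxMap z D y)| :=
    (continuous_comp_vertexBoxMap hu).abs.integrable_of_hasCompactSupport
      (HasCompactSupport.of_compactSpace _)
  rw [kernelMean, ← norm_eq_abs, ← integral_const_mul]
  refine norm_integral_le_of_norm_le (hint.const_mul K) (ae_of_all _ fun y => ?_)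
  rw [norm_mul]
  exact mul_le_mul_of_nonneg_right (hK y) (norm_nonneg _)

theorem continuous_kernelMean_mul (hu : ContinuousOn u (vertexBox z D)) :
    Continuous fun s : ι → I => kernelMean M u z fun i => D i * s i := by
  simp only [kernelMean, vertexBoxMap_mul, ← setIntegral_univ (μ := volume)]
  refine continuous_parametric_integral_of_continuous ?_ isCompact_univ
  exact ((continuous_productKernel M).comp continuous_snd).mul
    ((continuous_comp_vertexBoxMap hu).comp (by fun_prop : Continuous fun p : (ι → I) × (ι → I) =>
      p.1 * p.2))

variable [DecidableEq ι]

theorem productKernel_update (M : ι → ℕ) (y : ι → I) (i : ι) (t : I) :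
    productKernel M (update y i t) = (vertexKernel (M i)).eval (t : ℝ) *
      ∏ j ∈ Finset.univ.erase i, (vertexKernel (M j)).eval (y j : ℝ) := by
  rw [productKernel, ← Finset.mul_prod_erase _ _ (Finset.mem_univ i), update_self]
  congr 1
  exact Finset.prod_congr rfl fun j hj => by rw [update_of_ne (Finset.ne_of_mem_erase hj)]

theorem integral_productKernel_update_mul_sub {i : ι} (hi : 0 < M i) (y : ι → I) {f : ℝ → ℝ}
    (hf : ContinuousOn f (Set.Icc 0 1)) (c : ℝ) :
    ∫ t : I, productKernel M (update y i t) * (f t - c) =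
      (∏ j ∈ Finset.univ.erase i, (vertexKernel (M j)).eval (y j : ℝ)) *
        ((∫ t in 0..1, (vertexKernel (M i)).eval t * f t) - c) := by
  rw [← Set.uIcc_of_le zero_le_one] at hf
  set k := (vertexKernel (M i)).eval
  set P := ∏ j ∈ Finset.univ.erase i, (vertexKernel (M j)).eval (y j : ℝ)
  have hk : ContinuousOn k (Set.uIcc 0 1) := (vertexKernel (M i)).continuousOn
  have hkf : IntervalIntegrable (fun t => P * (k t * f t)) volume 0 1 :=
    (continuousOn_const.mul (hk.mul hf)).intervalIntegrable
  have hkc : IntervalIntegrable (fun t => P * (k t * c)) volume 0 1 :=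
    (continuousOn_const.mul (hk.mul continuousOn_const)).intervalIntegrable
  simp only [productKernel_update]
  rw [integral_unitInterval_coe fun t => k t * P * (f t - c)]
  simp only [mul_comm _ P, mul_assoc, mul_sub]
  rw [intervalIntegral.integral_sub hkf hkc]
  simp only [intervalIntegral.integral_const_mul, intervalIntegral.integral_mul_const]
  rw [integral_vertexKernel hi, one_mul]

theorem abs_integral_productKernel_update_le (hB : 1 ≤ B)
    (hMB : ∀ i, ∀ t ∈ Set.Icc (0 : ℝ) 1, |(vertexKernel (M i)).eval t| ≤ B)
    {V : Set (EuclideanSpace ℝ ι)} (hV : IsOpen V) (hbox : vertexBox z D ⊆ V) {i : ι}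
    (hi : 0 < M i) (hu : ContDiffOn ℝ (M i) u V) (y : ι → I) :
    |∫ t : I, productKernel M (update y i t) *
        (u (vertexBoxMap z D (update y i t)) - u (vertexBoxMap z (update D i 0) y))| ≤
      B ^ Fintype.card ι * |D i| ^ M i * ∫ t : I,
        |(dirDeriv (EuclideanSpace.single i 1))^[M i] u (vertexBoxMap z D (update y i t))| := by
  set e : EuclideanSpace ℝ ι := EuclideanSpace.single i 1
  simp only [vertexBoxMap_update]
  set p := vertexBoxMap z (update D i 0) y
  have hmem (t : ℝ) (ht : t ∈ Set.Icc (0 : ℝ) 1) : p + (D i * t) • e ∈ V :=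
    hbox (vertexBoxMap_update z D y i ⟨t, ht⟩ ▸ vertexBoxMap_mem z D _)
  have hP := (abs_prod_eval_vertexKernel_le hMB (Finset.univ.erase i) y).trans
    (pow_le_pow_right₀ hB (Finset.card_le_univ _))
  rw [integral_productKernel_update_mul_sub hi y (f := fun t => u (p + (D i * t) • e))
      (hu.continuousOn.comp (by fun_prop) hmem),
    integral_unitInterval_coe fun t => |(dirDeriv e)^[M i] u (p + (D i * t) • e)|,
    abs_mul, mul_assoc]
  exact mul_le_mul hP (abs_integral_vertexKernel_mul_line_sub_le hi hV hu hmem) (abs_nonneg _)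
    (by positivity)

theorem abs_kernelMean_sub_kernelMean_update_le (hB : 1 ≤ B)
    (hMB : ∀ i, ∀ t ∈ Set.Icc (0 : ℝ) 1, |(vertexKernel (M i)).eval t| ≤ B)
    {V : Set (EuclideanSpace ℝ ι)} (hV : IsOpen V) (hbox : vertexBox z D ⊆ V) {i : ι}
    (hi : 0 < M i) (hu : ContDiffOn ℝ (M i) u V) :
    |kernelMean M u z D - kernelMean M u z (update D i 0)| ≤
      B ^ Fintype.card ι * |D i| ^ M i *
        ∫ y, |(dirDeriv (EuclideanSpace.single i 1))^[M i] u (vertexBoxMap z D y)| := by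
  have hint {f : (ι → I) → ℝ} (hf : Continuous f) : Integrable f :=
    hf.integrable_of_hasCompactSupport (HasCompactSupport.of_compactSpace f)
  have hcomp {D' : ι → ℝ} (hD' : vertexBox z D' ⊆ V) :
      Continuous fun y => productKernel M y * u (vertexBoxMap z D' y) :=
    (continuous_productKernel M).mul (continuous_comp_vertexBoxMap (hu.continuousOn.mono hD'))
  have hface := (vertexBox_update_zero_subset z D i).trans hbox
  have hderiv := continuous_comp_vertexBoxMap
    ((continuousOn_iterate_dirDeriv (EuclideanSpace.single i 1) hV hu).mono hbox)
  rw [kernelMean, kernelMean, ← integral_sub (hint (hcomp hbox)) (hint (hcomp hface))]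
  simp only [← mul_sub]
  refine norm_integral_pi_le_of_update (fun _ => volume) (hint ?_) (hint hderiv) i _ fun y => ?_
  · simp only [mul_sub]
    exact (hcomp hbox).sub (hcomp hface)
  · simp only [vertexBoxMap_update_zero_update]
    exact abs_integral_productKernel_update_le hB hMB hV hbox hi hu y

end KernelMean

/-! ### Anisotropic dyadic scales -/

section Multiscale

open unitInterval Function Filter Topology

theorem dist_le_card_mul_of_update {ι : Type*} [Fintype ι] [DecidableEq ι] {X : ι → Type*}
    {Y : Type*} [PseudoMetricSpace Y] {F : (∀ i, X i) → Y} {x y c : ∀ i, X i} {e : ℝ}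
    (h : ∀ (S : Finset ι) i,
      dist (F (S.piecewise x y)) (F (update (S.piecewise x y) i (c i))) ≤ e) :
    dist (F x) (F y) ≤ Fintype.card ι * (2 * e) := by
  suffices hS : ∀ S : Finset ι, dist (F (S.piecewise x y)) (F y) ≤ S.card * (2 * e) by
    simpa using hS Finset.univ
  intro S
  induction S using Finset.induction with
  | empty => simp
  | insert i S hi ih =>
    have h₁ := h (insert i S) i
    have h₂ := h S i
    rw [Finset.piecewise_insert, update_idem, dist_comm] at h₁
    rw [Finset.piecewise_insert, Finset.card_insert_of_notMem hi]
    push_cast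
    linarith [dist_triangle_left (F (update (S.piecewise x y) i (x i))) (F (S.piecewise x y))
        (F (update (S.piecewise x y) i (c i))),
      dist_triangle (F (update (S.piecewise x y) i (x i))) (F (S.piecewise x y)) (F y),
      dist_comm (F (S.piecewise x y)) (F (update (S.piecewise x y) i (c i)))]

variable {ι : Type*}

/-- The edge lengths `D` after the anisotropic dilation by `s` that has weight `a i` in the `i`-th
coordinate. -/
def dilate (a : ι → ℕ) (D : ι → ℝ) (s : ℝ) (i : ι) : ℝ :=
  D i * s ^ a i

variable {a : ι → ℕ} {D : ι → ℝ} {s t : ℝ}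

@[simp]
theorem dilate_one (a : ι → ℕ) (D : ι → ℝ) : dilate a D 1 = D := by
  ext i; simp [dilate]

theorem dilate_ne_zero (hD : ∀ i, D i ≠ 0) (hs : s ≠ 0) (i : ι) : dilate a D s i ≠ 0 :=
  mul_ne_zero (hD i) (pow_ne_zero _ hs)

theorem dilate_mem_uIcc (hs : 0 ≤ s) (hst : s ≤ t) (i : ι) :
    dilate a D s i ∈ Set.uIcc 0 (dilate a D t i) := by
  have hpow := pow_le_pow_left₀ hs hst (a i)
  have hpow₀ := pow_nonneg hs (a i)
  rcases le_total 0 (D i) with hD | hD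
  · exact Set.Icc_subset_uIcc ⟨mul_nonneg hD hpow₀, mul_le_mul_of_nonneg_left hpow hD⟩
  · exact Set.Icc_subset_uIcc' ⟨mul_le_mul_of_nonpos_left hpow hD,
      mul_nonpos_of_nonpos_of_nonneg hD hpow₀⟩

theorem vertexBox_dilate_mono (z : EuclideanSpace ℝ ι) (a : ι → ℕ) (D : ι → ℝ) (hs : 0 ≤ s)
    (hst : s ≤ t) : vertexBox z (dilate a D s) ⊆ vertexBox z (dilate a D t) :=
  vertexBox_mono (dilate_mem_uIcc hs hst)

theorem vertexBox_dilate_subset (z : EuclideanSpace ℝ ι) (a : ι → ℕ) (D : ι → ℝ) (hs : 0 ≤ s)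
    (hs₁ : s ≤ 1) : vertexBox z (dilate a D s) ⊆ vertexBox z D := by
  simpa using vertexBox_dilate_mono z a D hs hs₁

variable [Fintype ι]

theorem prod_abs_dilate (a : ι → ℕ) (D : ι → ℝ) (hs : 0 ≤ s) :
    ∏ i, |dilate a D s i| = (∏ i, |D i|) * s ^ ∑ i, a i := by
  simp only [dilate, abs_mul, abs_pow, abs_of_nonneg hs, Finset.prod_mul_distrib,
    Finset.prod_pow_eq_pow_sum]

variable {M : ι → ℕ} {u : EuclideanSpace ℝ ι → ℝ} {z : EuclideanSpace ℝ ι}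

theorem tendsto_kernelMean_dilate (ha : ∀ i, 0 < a i) (hM : ∀ i, 0 < M i)
    (hu : ContinuousOn u (vertexBox z D)) {s : ℕ → I} (hs : Tendsto s atTop (𝓝 0)) :
    Tendsto (fun j => kernelMean M u z (dilate a D (s j))) atTop (𝓝 (u z)) := by
  have hlim : Tendsto (fun j i => s j ^ a i) atTop (𝓝 (0 : ι → I)) :=
    tendsto_pi_nhds.2 fun i => by simpa [(ha i).ne'] using hs.pow (a i)
  have h := ((continuous_kernelMean_mul (M := M) hu).tendsto 0).comp hlim
  have hzero : (fun i => D i * ((0 : ι → I) i : ℝ)) = 0 := by ext i; simp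
  rw [hzero, kernelMean_zero hM] at h
  exact h

theorem memLp_restrict_of_continuousOn_closure {X E : Type*} [PseudoMetricSpace X] [ProperSpace X]
    [MeasurableSpace X] [OpensMeasurableSpace X] [NormedAddCommGroup E]
    [SecondCountableTopologyEither X E] {μ : Measure X} [IsFiniteMeasureOnCompacts μ] {f : X → E}
    {O : Set X} (hO : Bornology.IsBounded O) (hf : ContinuousOn f (closure O)) (p : ℝ≥0∞) :
    MemLp f p (μ.restrict O) := by
  have hcpt : IsCompact (closure O) := hO.isCompact_closure
  have : IsFiniteMeasure (μ.restrict (closure O)) := ⟨by simpa using hcpt.measure_lt_top⟩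
  obtain ⟨C, hC⟩ := hcpt.exists_bound_of_continuousOn hf
  refine MemLp.mono_measure (Measure.restrict_mono_set μ subset_closure) ?_
  refine .of_bound (hf.aestronglyMeasurable isClosed_closure.measurableSet) C ?_
  exact ae_restrict_of_forall_mem isClosed_closure.measurableSet hC

theorem pow_mul_sqrt_inv_pow_le {L Q : ℕ} (hQ : Q < 2 * L) (hs : 0 < s) (hs₁ : s ≤ 1) :
    s ^ L * √((s / 4) ^ Q)⁻¹ ≤ 2 ^ Q * √s := by
  obtain ⟨t, ht, rfl⟩ : ∃ t, 0 < t ∧ s = t ^ 2 := ⟨√s, sqrt_pos.2 hs, (sq_sqrt hs.le).symm⟩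
  have ht₁ : t ≤ 1 := by nlinarith
  have hsq : (t ^ 2 / 4) ^ Q = ((t / 2) ^ Q) ^ 2 := by rw [← pow_mul, mul_comm, pow_mul]; ring
  rw [hsq, sqrt_inv, sqrt_sq (by positivity), sqrt_sq ht.le, ← pow_mul, div_pow, inv_div,
    mul_div_left_comm]
  gcongr
  rw [div_le_iff₀ (by positivity), ← pow_succ']
  exact pow_le_pow_of_le_one ht.le ht₁ hQ

theorem weight_order_pos {L : ℕ} (hL : ∀ i, a i * M i = L) (hQ : ∑ i, a i < 2 * L) (i : ι) :
    0 < a i ∧ 0 < M i :=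
  CanonicallyOrderedAdd.mul_pos.1 ((hL i).symm ▸ (by lia : 0 < L))

theorem abs_pow_mul_sqrt_prod_inv_le {L : ℕ} (hL : ∀ i, a i * M i = L) (hQ : ∑ i, a i < 2 * L)
    (hs : 0 < s) (hs₁ : s ≤ 1) {ρ : ι → ℝ} (hρ : ∀ i, ρ i ∈ Set.Icc (s / 4) s) (i : ι)
    (hD : ∀ i, D i ≠ 0) :
    |D i * ρ i ^ a i| ^ M i * √(∏ j, |D j * ρ j ^ a j|)⁻¹ ≤
      |D i| ^ M i * √(∏ j, |D j|)⁻¹ * 2 ^ (∑ j, a j) * √s := by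
  have hρ₀ (j : ι) : 0 < ρ j := (by positivity : 0 < s / 4).trans_le (hρ j).1
  have hprod : 0 < ∏ j, |D j| := Finset.prod_pos fun j _ => abs_pos.2 (hD j)
  have hnum : |D i * ρ i ^ a i| ^ M i ≤ |D i| ^ M i * s ^ L := by
    rw [abs_mul, mul_pow, abs_of_pos (pow_pos (hρ₀ i) _), ← pow_mul, hL]
    have := (hρ i).2
    have := (hρ₀ i).le
    gcongr
  have hvol : (∏ j, |D j|) * (s / 4) ^ (∑ j, a j) ≤ ∏ j, |D j * ρ j ^ a j| := by
    simp only [abs_mul, Finset.prod_mul_distrib, ← Finset.prod_pow_eq_pow_sum]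
    gcongr with j
    rw [abs_of_pos (pow_pos (hρ₀ j) _)]
    exact pow_le_pow_left₀ (by positivity) (hρ j).1 _
  calc |D i * ρ i ^ a i| ^ M i * √(∏ j, |D j * ρ j ^ a j|)⁻¹
    _ ≤ |D i| ^ M i * s ^ L * √((∏ j, |D j|) * (s / 4) ^ (∑ j, a j))⁻¹ := by gcongr
    _ = |D i| ^ M i * √(∏ j, |D j|)⁻¹ * (s ^ L * √((s / 4) ^ (∑ j, a j))⁻¹) := by
      rw [mul_inv, sqrt_mul (by positivity)]
      ring
    _ ≤ |D i| ^ M i * √(∏ j, |D j|)⁻¹ * 2 ^ (∑ j, a j) * √s := by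
      rw [mul_assoc _ (2 ^ _)]
      exact mul_le_mul_of_nonneg_left (pow_mul_sqrt_inv_pow_le hQ hs hs₁) (by positivity)

theorem setAverage_abs_dilate_le {b : ℝ} (hD : ∀ i, D i ≠ 0)
    (hu : ContinuousOn u (vertexBox z D))
    (hb : ∀ s ∈ Set.Ioc (0 : ℝ) 1, ⨍ x in vertexBox z (dilate a D s),
      |u x - ⨍ y in vertexBox z (dilate a D s), u y| ≤ b) (N : ℕ) :
    ⨍ x in vertexBox z (dilate a D ((1 / 4) ^ N)), |u x| ≤
      b + (⨍ x in vertexBox z D, |u x|) + N * (4 ^ (∑ i, a i) * b) := by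
  have hpos (j : ℕ) : (0 : ℝ) < (1 / 4) ^ j := by positivity
  have hle (j : ℕ) : (1 / 4 : ℝ) ^ j ≤ 1 := pow_le_one₀ (by norm_num) (by norm_num)
  have hvol (j : ℕ) : volume.real (vertexBox z (dilate a D ((1 / 4) ^ j))) =
      (∏ i, |D i|) * ((1 / 4) ^ j) ^ ∑ i, a i := by
    rw [volume_real_vertexBox z (dilate_ne_zero hD (hpos j).ne'), prod_abs_dilate a D (hpos j).le]
  have hvol_pos (j : ℕ) : 0 < volume.real (vertexBox z (dilate a D ((1 / 4) ^ j))) := by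
    rw [hvol]
    exact mul_pos (Finset.prod_pos fun i _ => abs_pos.2 (hD i)) (pow_pos (hpos j) _)
  have h := setAverage_norm_le_of_antitone (f := u) (μ := volume)
    (Q := fun j => vertexBox z (dilate a D ((1 / 4) ^ j))) (K := 4 ^ ∑ i, a i)
    (antitone_nat_of_succ_le fun j => vertexBox_dilate_mono z a D (hpos _).le
      (pow_le_pow_of_le_one (by norm_num) (by norm_num) j.le_succ))
    (fun j => (ENNReal.toReal_pos_iff.1 (hvol_pos j)).1.ne')
    (isCompact_vertexBox _ _).measure_ne_top
    (by simpa using hu.integrableOn_compact (isCompact_vertexBox z D))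
    (fun j => by
      rw [hvol, hvol, mul_left_comm, ← mul_pow, pow_succ]
      exact le_of_eq (by ring))
    (fun j => hb _ ⟨hpos j, hle j⟩) N
  simpa using h

theorem abs_kernelMean_dilate_le {b B : ℝ} {O : Set (EuclideanSpace ℝ ι)} (hB : 1 ≤ B)
    (hMB : ∀ i, ∀ t ∈ Set.Icc (0 : ℝ) 1, |(vertexKernel (M i)).eval t| ≤ B) (hD : ∀ i, D i ≠ 0)
    (hbox : vertexBox z D ⊆ O) (huO : IntegrableOn u O) (hu : ContinuousOn u (vertexBox z D))
    (hb : ∀ s ∈ Set.Ioc (0 : ℝ) 1, ⨍ x in vertexBox z (dilate a D s),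
      |u x - ⨍ y in vertexBox z (dilate a D s), u y| ≤ b) (N : ℕ) :
    |kernelMean M u z (dilate a D ((1 / 4) ^ N))| ≤ B ^ Fintype.card ι *
      (b + (∏ i, |D i|)⁻¹ * (∫ x in O, |u x|) + N * (4 ^ (∑ i, a i) * b)) := by
  have hs : (0 : ℝ) < (1 / 4) ^ N := by positivity
  have hs₁ : (1 / 4 : ℝ) ^ N ≤ 1 := pow_le_one₀ (by norm_num) (by norm_num)
  have huN := hu.mono (vertexBox_dilate_subset z a D hs.le hs₁)
  refine (abs_kernelMean_le (abs_productKernel_le hMB) huN).trans ?_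
  rw [integral_comp_vertexBoxMap (dilate_ne_zero hD hs.ne') huN.abs]
  gcongr
  refine (setAverage_abs_dilate_le hD hu hb N).trans ?_
  gcongr
  rw [setAverage_eq, volume_real_vertexBox z hD, smul_eq_mul]
  exact mul_le_mul_of_nonneg_left (setIntegral_mono_set huO.abs
    (ae_of_all _ fun x => abs_nonneg (u x)) hbox.eventuallyLE) (by positivity)

variable [DecidableEq ι] {B K W : ℝ} {L : ℕ} {O V : Set (EuclideanSpace ℝ ι)}

theorem abs_kernelMean_sub_kernelMean_update_le_eLpNorm (hB : 1 ≤ B)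
    (hMB : ∀ i, ∀ t ∈ Set.Icc (0 : ℝ) 1, |(vertexKernel (M i)).eval t| ≤ B)
    (hO : Bornology.IsBounded O) (hV : IsOpen V) (hOV : closure O ⊆ V)
    (hbox : vertexBox z D ⊆ O) (hD : ∀ i, D i ≠ 0) {i : ι} (hi : 0 < M i)
    (hu : ContDiffOn ℝ (M i) u V) :
    |kernelMean M u z D - kernelMean M u z (update D i 0)| ≤
      B ^ Fintype.card ι * (|D i| ^ M i * √(∏ j, |D j|)⁻¹) *
        (eLpNorm ((dirDeriv (.single i 1))^[M i] u) 2 (volume.restrict O)).toReal := by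
  have hboxV : vertexBox z D ⊆ V := hbox.trans (subset_closure.trans hOV)
  have hcont := continuousOn_iterate_dirDeriv (EuclideanSpace.single i 1) hV hu
  refine (abs_kernelMean_sub_kernelMean_update_le hB hMB hV hboxV hi hu).trans ?_
  rw [integral_comp_vertexBoxMap hD (hcont.mono hboxV).abs, ← mul_assoc, mul_assoc _ (√_),
    ← volume_real_vertexBox z hD]
  gcongr
  refine setAverage_norm_le_eLpNorm hbox ?_ (isCompact_vertexBox z D).measure_ne_top
    (memLp_restrict_of_continuousOn_closure hO (hcont.mono hOV) 2)
  simpa [volume_vertexBox z hD] using Finset.prod_pos fun i _ => abs_pos.2 (hD i)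

/-- Passing from one box to the next, the edges are shortened one at a time, each time by way of
the face on which that edge has length zero. -/
theorem dist_kernelMean_dilate_le (hB : 1 ≤ B)
    (hMB : ∀ i, ∀ t ∈ Set.Icc (0 : ℝ) 1, |(vertexKernel (M i)).eval t| ≤ B)
    (hO : Bornology.IsBounded O) (hV : IsOpen V) (hOV : closure O ⊆ V)
    (hbox : vertexBox z D ⊆ O) (hD : ∀ i, D i ≠ 0) (hL : ∀ i, a i * M i = L)
    (hQ : ∑ i, a i < 2 * L) (hu : ContDiffOn ℝ L u V)
    (hW : ∀ i, (eLpNorm ((dirDeriv (EuclideanSpace.single i 1))^[M i] u) 2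
      (volume.restrict O)).toReal ≤ W)
    (hK : ∀ i, B ^ Fintype.card ι * (|D i| ^ M i * √(∏ j, |D j|)⁻¹ * 2 ^ (∑ j, a j)) ≤ K)
    (hs : 0 < s) (hs₁ : s ≤ 1) :
    dist (kernelMean M u z (dilate a D s)) (kernelMean M u z (dilate a D (s / 4))) ≤
      Fintype.card ι * (2 * (K * √s * W)) := by
  refine dist_le_card_mul_of_update (c := fun _ => 0) fun S i => ?_
  set ρ : ι → ℝ := S.piecewise (fun _ => s) fun _ => s / 4
  have hρ (j : ι) : ρ j ∈ Set.Icc (s / 4) s := by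
    by_cases hj : j ∈ S <;> simp only [ρ, hj, Finset.piecewise_eq_of_mem, not_false_eq_true,
      Finset.piecewise_eq_of_notMem] <;> constructor <;> linarith
  have hmixed : S.piecewise (dilate a D s) (dilate a D (s / 4)) = fun j => D j * ρ j ^ a j := by
    ext j
    by_cases hj : j ∈ S <;> simp [ρ, hj, dilate]
  have hρ₀ (j : ι) : 0 < ρ j := (by positivity : 0 < s / 4).trans_le (hρ j).1
  have hsub : vertexBox z (fun j => D j * ρ j ^ a j) ⊆ vertexBox z D := by
    refine vertexBox_mono fun j => ?_
    simpa [dilate] using dilate_mem_uIcc (a := a) (D := D) (hρ₀ j).le ((hρ j).2.trans hs₁) j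
  rw [hmixed]
  have hi := weight_order_pos hL hQ i
  have hML : M i ≤ L := (Nat.le_mul_of_pos_left _ hi.1).trans_eq (hL i)
  refine (abs_kernelMean_sub_kernelMean_update_le_eLpNorm hB hMB hO hV hOV (hsub.trans hbox)
    (fun j => mul_ne_zero (hD j) (pow_pos (hρ₀ j) _).ne') hi.2 (hu.of_le (mod_cast hML))).trans ?_
  have hK₀ : 0 ≤ K := le_trans (by positivity) (hK i)
  refine mul_le_mul ?_ (hW i) ENNReal.toReal_nonneg (by positivity)
  calc _ ≤ B ^ Fintype.card ι * (|D i| ^ M i * √(∏ j, |D j|)⁻¹ * 2 ^ (∑ j, a j) * √s) := by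
        exact mul_le_mul_of_nonneg_left (abs_pow_mul_sqrt_prod_inv_le hL hQ hs hs₁ hρ i hD)
          (by positivity)
    _ ≤ K * √s := by
      rw [← mul_assoc]
      exact mul_le_mul_of_nonneg_right (hK i) (sqrt_nonneg s)

theorem dist_kernelMean_dilate_self_le (hB : 1 ≤ B)
    (hMB : ∀ i, ∀ t ∈ Set.Icc (0 : ℝ) 1, |(vertexKernel (M i)).eval t| ≤ B)
    (hO : Bornology.IsBounded O) (hV : IsOpen V) (hOV : closure O ⊆ V)
    (hbox : vertexBox z D ⊆ O) (hD : ∀ i, D i ≠ 0) (hL : ∀ i, a i * M i = L)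
    (hQ : ∑ i, a i < 2 * L) (hu : ContDiffOn ℝ L u V)
    (hW : ∀ i, (eLpNorm ((dirDeriv (EuclideanSpace.single i 1))^[M i] u) 2
      (volume.restrict O)).toReal ≤ W)
    (hK : ∀ i, B ^ Fintype.card ι * (|D i| ^ M i * √(∏ j, |D j|)⁻¹ * 2 ^ (∑ j, a j)) ≤ K)
    (N : ℕ) :
    dist (kernelMean M u z (dilate a D ((1 / 4) ^ N))) (u z) ≤
      2 * (Fintype.card ι * (2 * (K * W))) / 2 ^ N := by
  have hquarter : Tendsto (fun j => (⟨1 / 4, by norm_num, by norm_num⟩ : I) ^ j) atTop (𝓝 0) :=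
    tendsto_subtype_rng.2 <| by
      simpa using tendsto_pow_atTop_nhds_zero_of_lt_one (r := (1 / 4 : ℝ)) (by norm_num)
        (by norm_num)
  refine dist_le_of_le_geometric_two_of_tendsto (fun j => ?_) (tendsto_kernelMean_dilate
    (fun i => (weight_order_pos hL hQ i).1) (fun i => (weight_order_pos hL hQ i).2)
    (hu.continuousOn.mono (hbox.trans (subset_closure.trans hOV))) hquarter) N
  have hsqrt : √((1 / 4 : ℝ) ^ j) = (2 ^ j)⁻¹ := by
    rw [sqrt_eq_iff_mul_self_eq (by positivity) (by positivity), ← mul_inv, ← mul_pow,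
      one_div, inv_pow]
    norm_num
  have h := dist_kernelMean_dilate_le hB hMB hO hV hOV hbox hD hL hQ hu hW hK
    (s := (1 / 4) ^ j) (by positivity) (pow_le_one₀ (by norm_num) (by norm_num))
  have hsucc : (1 / 4 : ℝ) ^ j / 4 = (1 / 4) ^ (j + 1) := by ring
  rw [hsqrt, hsucc] at h
  refine h.trans_eq ?_
  field_simp

theorem abs_le_of_vertexBox {b : ℝ} (hB : 1 ≤ B)
    (hMB : ∀ i, ∀ t ∈ Set.Icc (0 : ℝ) 1, |(vertexKernel (M i)).eval t| ≤ B)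
    (hO : Bornology.IsBounded O) (hV : IsOpen V) (hOV : closure O ⊆ V)
    (hbox : vertexBox z D ⊆ O) (hD : ∀ i, D i ≠ 0) (hL : ∀ i, a i * M i = L)
    (hQ : ∑ i, a i < 2 * L) (hu : ContDiffOn ℝ L u V)
    (hW : ∀ i, (eLpNorm ((dirDeriv (EuclideanSpace.single i 1))^[M i] u) 2
      (volume.restrict O)).toReal ≤ W)
    (hW₀ : 0 ≤ W)
    (hK : ∀ i, B ^ Fintype.card ι * (|D i| ^ M i * √(∏ j, |D j|)⁻¹ * 2 ^ (∑ j, a j)) ≤ K)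
    (hK₀ : 0 ≤ K)
    (hb : ∀ s ∈ Set.Ioc (0 : ℝ) 1, ⨍ x in vertexBox z (dilate a D s),
      |u x - ⨍ y in vertexBox z (dilate a D s), u y| ≤ b) (N : ℕ) :
    |u z| ≤ (B ^ Fintype.card ι * (1 + (∏ i, |D i|)⁻¹ + 4 ^ ∑ i, a i) +
      4 * Fintype.card ι * K) * (b + (∫ x in O, |u x|) + N * b + W / 2 ^ N) := by
  have hstep := dist_kernelMean_dilate_self_le hB hMB hO hV hOV hbox hD hL hQ hu hW hK N
  have hmean := abs_kernelMean_dilate_le hB hMB hD hbox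
    (memLp_one_iff_integrable.1 (memLp_restrict_of_continuousOn_closure hO
      (hu.continuousOn.mono hOV) 1))
    (hu.continuousOn.mono (hbox.trans (subset_closure.trans hOV))) hb N
  have hb₀ : 0 ≤ b := (integral_nonneg fun x => abs_nonneg _).trans (hb 1 ⟨one_pos, le_rfl⟩)
  have hJ : 0 ≤ ∫ x in O, |u x| := integral_nonneg fun x => abs_nonneg _
  rw [dist_comm, dist_eq] at hstep
  set A := B ^ Fintype.card ι
  set J := ∫ x in O, |u x|
  set R := b + J + N * b + W / 2 ^ N
  have hNb : 0 ≤ N * b := by positivity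
  have hWN : 0 ≤ W / 2 ^ N := by positivity
  calc |u z|
    _ ≤ A * (b + (∏ i, |D i|)⁻¹ * J + N * (4 ^ (∑ i, a i) * b)) +
        2 * (Fintype.card ι * (2 * (K * W))) / 2 ^ N := by
      linarith [abs_sub_abs_le_abs_sub (u z) (kernelMean M u z (dilate a D ((1 / 4) ^ N)))]
    _ = A * (b + (∏ i, |D i|)⁻¹ * J + 4 ^ (∑ i, a i) * (N * b)) +
        4 * Fintype.card ι * K * (W / 2 ^ N) := by ring
    _ ≤ A * (R + (∏ i, |D i|)⁻¹ * R + 4 ^ (∑ i, a i) * R) + 4 * Fintype.card ι * K * R := by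
      gcongr <;> simp only [R] <;> linarith
    _ = (A * (1 + (∏ i, |D i|)⁻¹ + 4 ^ ∑ i, a i) + 4 * Fintype.card ι * K) * R := by ring

theorem exists_forall_abs_le_of_vertexBox (hL : ∀ i, a i * M i = L) (hQ : ∑ i, a i < 2 * L)
    {d : ι → ℝ} (hd : ∀ i, 0 < d i) :
    ∃ C, 0 < C ∧ ∀ {O V : Set (EuclideanSpace ℝ ι)} {u z D} {b W : ℝ}, Bornology.IsBounded O →
      IsOpen V → closure O ⊆ V → ContDiffOn ℝ L u V → (∀ i, |D i| = d i) → vertexBox z D ⊆ O →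
      (∀ s ∈ Set.Ioc (0 : ℝ) 1, ⨍ x in vertexBox z (dilate a D s),
        |u x - ⨍ y in vertexBox z (dilate a D s), u y| ≤ b) →
      (∀ i, (eLpNorm ((dirDeriv (EuclideanSpace.single i 1))^[M i] u) 2
        (volume.restrict O)).toReal ≤ W) → 0 ≤ W →
      ∀ N : ℕ, |u z| ≤ C * (b + (∫ x in O, |u x|) + N * b + W / 2 ^ N) := by
  obtain ⟨B, hB, hMB⟩ := exists_forall_abs_eval_vertexKernel_le M
  have hvol : 0 < ∏ i, d i := Finset.prod_pos fun i _ => hd i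
  set c : ι → ℝ := fun i => B ^ Fintype.card ι * (d i ^ M i * √(∏ j, d j)⁻¹ * 2 ^ (∑ j, a j))
  have hc (i : ι) : 0 ≤ c i := by
    have := (hd i).le
    positivity
  have hK : 0 ≤ ∑ i, c i := Finset.sum_nonneg fun i _ => hc i
  refine ⟨B ^ Fintype.card ι * (1 + (∏ i, d i)⁻¹ + 4 ^ ∑ i, a i) + 4 * Fintype.card ι * ∑ i, c i,
    by positivity, ?_⟩
  intro O V u z D b W hO hV hOV hu hDd hbox hb hW hW₀ N
  obtain rfl : d = fun i => |D i| := funext fun i => (hDd i).symm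
  have hD (i : ι) : D i ≠ 0 := abs_pos.1 (hd i)
  exact abs_le_of_vertexBox hB hMB hO hV hOV hbox hD hL hQ hu hW hW₀
    (fun i => Finset.single_le_sum (f := c) (fun i _ => hc i) (Finset.mem_univ i)) hK hb N

end Multiscale

/-! ### Parabolic cubes and norms -/

section Parabolic

open Set

variable {n : ℕ}

/-- The homogeneity of the coordinates under parabolic scaling: `1` for each spatial coordinate
and `2` for time. -/
def parabolicWeight (n : ℕ) : Fin (n + 1) → ℕ :=
  Fin.lastCases 2 fun _ => 1

/-- The order of the pure derivatives in each coordinate controlled by the norm of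
`W₂^{2m,m}`. -/
def parabolicOrder (n m : ℕ) : Fin (n + 1) → ℕ :=
  Fin.lastCases m fun _ => 2 * m

@[simp]
theorem parabolicWeight_castSucc (i : Fin n) : parabolicWeight n i.castSucc = 1 := by
  simp [parabolicWeight]

@[simp]
theorem parabolicWeight_last : parabolicWeight n (Fin.last n) = 2 := by
  simp [parabolicWeight]

@[simp]
theorem parabolicOrder_castSucc (m : ℕ) (i : Fin n) : parabolicOrder n m i.castSucc = 2 * m := by
  simp [parabolicOrder]

@[simp]
theorem parabolicOrder_last (m : ℕ) : parabolicOrder n m (Fin.last n) = m := by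
  simp [parabolicOrder]

theorem parabolicWeight_mul_parabolicOrder (m : ℕ) (i : Fin (n + 1)) :
    parabolicWeight n i * parabolicOrder n m i = 2 * m := by
  cases i using Fin.lastCases <;> simp

theorem sum_parabolicWeight (n : ℕ) : ∑ i, parabolicWeight n i = n + 2 := by
  simp [Fin.sum_univ_castSucc]

theorem pCube_eq_preimage_pi (z₀ : PSpace n) {r : ℝ} (hr : 0 < r) :
    pCube z₀ r = WithLp.ofLp ⁻¹' univ.pi fun i =>
      Ioo (z₀ i - r ^ parabolicWeight n i) (z₀ i + r ^ parabolicWeight n i) := by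
  ext z
  have hspace : (⨆ i : Fin n, |z i.castSucc - z₀ i.castSucc|) < r ↔
      ∀ i : Fin n, |z i.castSucc - z₀ i.castSucc| < r := by
    rcases isEmpty_or_nonempty (Fin n) with h | h
    · simpa using hr
    · rw [iSup, (finite_range _).csSup_lt_iff (range_nonempty _), forall_mem_range]
  simp [pCube, pnorm, Fin.forall_fin_succ', hspace, sqrt_lt' hr, ← Real.ball_eq_Ioo, dist_eq]

theorem uIcc_add_eq_Icc_midpoint (a d : ℝ) :
    uIcc a (a + d) = Icc (a + d / 2 - |d| / 2) (a + d / 2 + |d| / 2) := by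
  rcases le_total 0 d with hd | hd
  · rw [uIcc_of_le (by linarith), abs_of_nonneg hd]
    congr 1 <;> ring
  · rw [uIcc_of_ge (by linarith), abs_of_nonpos hd]
    congr 1 <;> ring

/-- The midpoint of the box with vertex `z` and signed edge lengths `D`. -/
def vertexBoxCenter {ι : Type*} (z : EuclideanSpace ℝ ι) (D : ι → ℝ) : EuclideanSpace ℝ ι :=
  z + WithLp.toLp 2 fun i => D i / 2

variable {z : PSpace n} {D : Fin (n + 1) → ℝ} {r : ℝ}

theorem vertexBox_eq_preimage_pi (hD : ∀ i, |D i| = 2 * r ^ parabolicWeight n i) :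
    vertexBox z D = WithLp.ofLp ⁻¹' univ.pi fun i =>
      Icc (vertexBoxCenter z D i - r ^ parabolicWeight n i)
        (vertexBoxCenter z D i + r ^ parabolicWeight n i) := by
  ext x
  simp [mem_vertexBox_iff, uIcc_add_eq_Icc_midpoint, hD, vertexBoxCenter, -pi_univ_Icc]

theorem pCube_subset_vertexBox (hr : 0 < r) (hD : ∀ i, |D i| = 2 * r ^ parabolicWeight n i) :
    pCube (vertexBoxCenter z D) r ⊆ vertexBox z D := by
  rw [pCube_eq_preimage_pi _ hr, vertexBox_eq_preimage_pi hD]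
  exact preimage_mono (pi_mono fun i _ => Ioo_subset_Icc_self)

theorem pCube_ae_eq_vertexBox (hr : 0 < r) (hD : ∀ i, |D i| = 2 * r ^ parabolicWeight n i) :
    pCube (vertexBoxCenter z D) r =ᵐ[volume] vertexBox z D := by
  rw [pCube_eq_preimage_pi _ hr, vertexBox_eq_preimage_pi hD, pi_univ_Icc]
  exact (PiLp.volume_preserving_ofLp _).quasiMeasurePreserving.preimage_ae_eq
    Measure.univ_pi_Ioo_ae_eq_Icc

theorem abs_dilate_eq {s : ℝ} (hs : 0 ≤ s) (hD : ∀ i, |D i| = 2 * r ^ parabolicWeight n i)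
    (i : Fin (n + 1)) :
    |dilate (parabolicWeight n) D s i| = 2 * (r * s) ^ parabolicWeight n i := by
  rw [dilate, abs_mul, hD, abs_of_nonneg (pow_nonneg hs _), mul_pow, mul_assoc]

variable {O : Set (PSpace n)} {u : PSpace n → ℝ}

theorem pBMO_nonneg (O : Set (PSpace n)) (u : PSpace n → ℝ) : 0 ≤ pBMO O u := by
  refine Real.sSup_nonneg ?_
  rintro v ⟨z₀, r, -, -, rfl⟩
  exact integral_nonneg fun _ => abs_nonneg _

theorem bddAbove_oscSet (hO : Bornology.IsBounded O) (hu : ContinuousOn u (closure O)) :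
    BddAbove (oscSet O u) := by
  obtain ⟨b, hb⟩ := hO.isCompact_closure.exists_bound_of_continuousOn hu
  refine ⟨2 * max b 0, ?_⟩
  rintro v ⟨z₀, r, hr, hsub, rfl⟩
  have hmeas : MeasurableSet (pCube z₀ r) := by
    rw [pCube_eq_preimage_pi z₀ hr]
    exact (PiLp.continuous_ofLp 2 _).measurable
      (MeasurableSet.univ_pi fun _ => measurableSet_Ioo)
  exact average_norm_sub_average_le (le_max_right _ _) (ae_restrict_of_forall_mem hmeas
    fun x hx => (hb x (subset_closure (hsub hx))).trans (le_max_left _ _))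

theorem setAverage_abs_sub_vertexBox_le_pBMO (hO : Bornology.IsBounded O)
    (hu : ContinuousOn u (closure O)) (hr : 0 < r)
    (hD : ∀ i, |D i| = 2 * r ^ parabolicWeight n i) (hsub : vertexBox z D ⊆ O) :
    ⨍ x in vertexBox z D, |u x - ⨍ y in vertexBox z D, u y| ≤ pBMO O u := by
  simp only [← setAverage_congr (pCube_ae_eq_vertexBox hr hD)]
  exact le_csSup (bddAbove_oscSet hO hu)
    ⟨_, r, hr, (pCube_subset_vertexBox hr hD).trans hsub, rfl⟩

theorem setAverage_abs_sub_dilate_le_pBMO (hO : Bornology.IsBounded O)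
    (hu : ContinuousOn u (closure O)) (hr : 0 < r)
    (hD : ∀ i, |D i| = 2 * r ^ parabolicWeight n i) (hsub : vertexBox z D ⊆ O) {s : ℝ}
    (hs : s ∈ Ioc (0 : ℝ) 1) :
    ⨍ x in vertexBox z (dilate (parabolicWeight n) D s),
      |u x - ⨍ y in vertexBox z (dilate (parabolicWeight n) D s), u y| ≤ pBMO O u :=
  setAverage_abs_sub_vertexBox_le_pBMO hO hu (mul_pos hr hs.1) (abs_dilate_eq hs.1.le hD)
    ((vertexBox_dilate_subset z _ D hs.1.le hs.2).trans hsub)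

theorem sobNorm_nonneg (m : ℕ) (O : Set (PSpace n)) (u : PSpace n → ℝ) : 0 ≤ sobNorm m O u :=
  Finset.sum_nonneg fun _ _ => Finset.sum_nonneg fun _ _ => ENNReal.toReal_nonneg

theorem L2norm_mixDeriv_le_sobNorm {m k : ℕ} {α : Fin n → ℕ} (h : 2 * k + ∑ i, α i ≤ 2 * m)
    (O : Set (PSpace n)) (u : PSpace n → ℝ) : L2norm O (mixDeriv k α u) ≤ sobNorm m O u := by
  calc L2norm O (mixDeriv k α u)
    _ ≤ ∑ β ∈ Finset.Nat.antidiagonalTuple n (∑ i, α i), L2norm O (mixDeriv k β u) :=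
      Finset.single_le_sum (f := fun β => L2norm O (mixDeriv k β u))
        (fun _ _ => ENNReal.toReal_nonneg) (Finset.Nat.mem_antidiagonalTuple.2 rfl)
    _ ≤ sobNorm m O u :=
      Finset.single_le_sum (f := fun p : ℕ × ℕ => ∑ β ∈ Finset.Nat.antidiagonalTuple n p.2,
          L2norm O (mixDeriv p.1 β u)) (a := (k, ∑ i, α i))
        (fun _ _ => Finset.sum_nonneg fun _ _ => ENNReal.toReal_nonneg) (by simp; lia)

theorem foldr_iterate_single {ι β : Type*} [DecidableEq ι] (g : ι → β → β) (i : ι) (k : ℕ) (b : β)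
    {l : List ι} (hl : l.Nodup) (hi : i ∈ l) :
    l.foldr (fun j v => (g j)^[(Pi.single i k : ι → ℕ) j] v) b = (g i)^[k] b := by
  have hfix {l : List ι} (hl : i ∉ l) :
      l.foldr (fun j v => (g j)^[(Pi.single i k : ι → ℕ) j] v) b = b := by
    induction l with
    | nil => rfl
    | cons j l ih =>
      rw [List.mem_cons, not_or] at hl
      simp [ih hl.2, Ne.symm hl.1]
  induction l with
  | nil => simp at hi
  | cons j l ih =>
    rw [List.nodup_cons] at hl
    rcases List.mem_cons.1 hi with rfl | hi
    · simp [hfix hl.1]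
    · have hji : j ≠ i := fun h => hl.1 (h ▸ hi)
      simp [ih hl.2 hi, hji]

theorem DxPow_single (i : Fin n) (k : ℕ) (u : PSpace n → ℝ) :
    DxPow (Pi.single i k) u = (Dx i)^[k] u :=
  foldr_iterate_single Dx i k u (List.nodup_finRange n) (List.mem_finRange i)

theorem DxPow_zero (u : PSpace n → ℝ) : DxPow 0 u = u := by
  simp [DxPow]

theorem eLpNorm_iterate_dirDeriv_le_sobNorm (m : ℕ) (O : Set (PSpace n)) (u : PSpace n → ℝ)
    (i : Fin (n + 1)) :
    (eLpNorm ((dirDeriv (EuclideanSpace.single i 1))^[parabolicOrder n m i] u) 2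
      (volume.restrict O)).toReal ≤ sobNorm m O u := by
  cases i using Fin.lastCases with
  | last =>
    have h := L2norm_mixDeriv_le_sobNorm (m := m) (k := m) (α := 0) (by simp) O u
    rw [mixDeriv, DxPow_zero] at h
    rwa [parabolicOrder_last]
  | cast i =>
    have h := L2norm_mixDeriv_le_sobNorm (m := m) (k := 0) (α := Pi.single i (2 * m)) (by simp) O u
    rw [mixDeriv, DxPow_single] at h
    rwa [parabolicOrder_castSucc]

theorem exists_le_two_pow_and_le_logPlus (W : ℝ) :
    ∃ N : ℕ, W ≤ 2 ^ N ∧ (N : ℝ) ≤ 2 * (1 + logPlus W) := by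
  have hl : 0 ≤ logPlus W := le_max_right _ _
  refine ⟨⌈2 * logPlus W⌉₊, ?_, by linarith [Nat.ceil_lt_add_one (mul_nonneg two_pos.le hl)]⟩
  rcases le_or_gt W 0 with hW | hW
  · exact hW.trans (by positivity)
  rw [← log_le_log_iff hW (by positivity), log_pow]
  nlinarith [Nat.le_ceil (2 * logPlus W), log_two_gt_d9, le_max_left (log W) 0,
    show logPlus W = max (log W) 0 from rfl]

end Parabolic

/-! ### The logarithmic inequality -/

section LogSobolev

open Set

variable {n : ℕ}

/-- Every point of `O` is a vertex of a closed parabolic cube of radius `r` inside `O`. This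
regularity of `O` replaces an extension of `u` across the boundary. -/
def HasVertexCubes (O : Set (PSpace n)) (r : ℝ) : Prop :=
  ∀ z ∈ O, ∃ D : Fin (n + 1) → ℝ, (∀ i, |D i| = 2 * r ^ parabolicWeight n i) ∧ vertexBox z D ⊆ O

theorem isBounded_OmegaT (n : ℕ) (T : ℝ) : Bornology.IsBounded (OmegaT n T) := by
  have hK : IsCompact (WithLp.toLp 2 '' (univ.pi fun _ : Fin (n + 1) => Icc (0 : ℝ) (max 1 T))) :=
    (isCompact_univ_pi fun _ => isCompact_Icc).image (PiLp.continuous_toLp 2 _)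
  refine hK.isBounded.subset fun z hz => ⟨z.ofLp, fun i _ => ?_, rfl⟩
  cases i using Fin.lastCases with
  | last => exact ⟨hz.2.1.le, hz.2.2.le.trans (le_max_right _ _)⟩
  | cast i => exact ⟨(hz.1 i).1.le, (hz.1 i).2.le.trans (le_max_left _ _)⟩

theorem exists_uIcc_add_subset_Ioo {x ℓ e : ℝ} (hx : x ∈ Ioo 0 ℓ) (he : 0 ≤ e) (heℓ : 2 * e < ℓ) :
    ∃ δ, |δ| = e ∧ uIcc x (x + δ) ⊆ Ioo 0 ℓ := by
  rcases lt_or_ge (x + e) ℓ with h | h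
  · refine ⟨e, abs_of_nonneg he, ?_⟩
    rw [uIcc_of_le (by linarith)]
    exact Icc_subset_Ioo hx.1 h
  · refine ⟨-e, by rw [abs_neg, abs_of_nonneg he], ?_⟩
    rw [uIcc_of_ge (by linarith)]
    exact Icc_subset_Ioo (by linarith) hx.2

theorem exists_hasVertexCubes_OmegaT (n : ℕ) {T : ℝ} (hT : 0 < T) :
    ∃ r, 0 < r ∧ HasVertexCubes (OmegaT n T) r := by
  obtain ⟨r, hr, hr₁, hrT⟩ : ∃ r, 0 < r ∧ 8 * r ≤ 1 ∧ 8 * r ≤ T :=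
    ⟨min 1 T / 8, by positivity, by linarith [min_le_left 1 T], by linarith [min_le_right 1 T]⟩
  refine ⟨r, hr, fun z hz => ?_⟩
  choose δ hδ hδ_sub using fun i =>
    exists_uIcc_add_subset_Ioo (e := 2 * r) (hz.1 i) (by positivity) (by linarith)
  obtain ⟨τ, hτ, hτ_sub⟩ :=
    exists_uIcc_add_subset_Ioo (e := 2 * r ^ 2) hz.2 (by positivity) (by nlinarith)
  refine ⟨Fin.lastCases τ δ, fun i => ?_, fun x hx => ?_⟩
  · cases i using Fin.lastCases with
    | last => simpa using hτ
    | cast i => simpa using hδ i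
  · rw [mem_vertexBox_iff, Fin.forall_fin_succ'] at hx
    simp only [Fin.lastCases_castSucc, Fin.lastCases_last] at hx
    exact ⟨fun i => hδ_sub i (hx.1 i), hτ_sub hx.2⟩

theorem parabolic_log_sobolev_inequality_bounded_general (n m : ℕ)
    (hmn : ((n : ℝ) + 2) / 4 < m) {r : ℝ} (hr : 0 < r) :
    ∃ C : ℝ, 0 < C ∧ ∀ O : Set (PSpace n), Bornology.IsBounded O → HasVertexCubes O r →
      ∀ (u : PSpace n → ℝ) (V : Set (PSpace n)), IsOpen V → closure O ⊆ V →
      ContDiffOn ℝ (2 * m : ℕ) u V →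
      (⨆ z ∈ O, |u z|) ≤
        C * (1 + (pBMO O u + ∫ z in O, |u z|) * (1 + logPlus (sobNorm m O u))) := by
  have hQ : ∑ i, parabolicWeight n i < 2 * (2 * m) := by
    rw [sum_parabolicWeight, ← @Nat.cast_lt ℝ]
    push_cast
    linarith
  obtain ⟨K, hK, hKu⟩ := exists_forall_abs_le_of_vertexBox
    (parabolicWeight_mul_parabolicOrder m) hQ (d := fun i => 2 * r ^ parabolicWeight n i)
    (fun i => by positivity)
  refine ⟨3 * K, by positivity, fun O hO hcubes u V hV hOV hu => ?_⟩
  set b := pBMO O u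
  set W := sobNorm m O u
  set J := ∫ z in O, |u z|
  have hb : 0 ≤ b := pBMO_nonneg O u
  have hJ : 0 ≤ J := integral_nonneg fun _ => abs_nonneg _
  have hlog : 0 ≤ logPlus W := le_max_right _ _
  obtain ⟨N, hWN, hN⟩ := exists_le_two_pow_and_le_logPlus W
  have hrhs : 0 ≤ 3 * K * (1 + (b + J) * (1 + logPlus W)) := by positivity
  refine Real.iSup_le (fun z => Real.iSup_le (fun hz => ?_) hrhs) hrhs
  obtain ⟨D, hD, hDO⟩ := hcubes z hz
  calc |u z|
    _ ≤ K * (b + J + N * b + W / 2 ^ N) := hKu hO hV hOV hu hD hDO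
      (fun s hs => setAverage_abs_sub_dilate_le_pBMO hO (hu.continuousOn.mono hOV) hr hD hDO hs)
      (eLpNorm_iterate_dirDeriv_le_sobNorm m O u) (sobNorm_nonneg m O u) N
    _ ≤ K * (b + J + 2 * (1 + logPlus W) * b + 1) := by
      gcongr
      exact div_le_one_of_le₀ hWN (by positivity)
    _ ≤ K * (3 * (1 + (b + J) * (1 + logPlus W))) :=
      mul_le_mul_of_nonneg_left (by linarith [mul_nonneg hb hlog, mul_nonneg hJ hlog]) hK.le
    _ = 3 * K * (1 + (b + J) * (1 + logPlus W)) := by ring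

end LogSobolev

/-- **Parabolic logarithmic Sobolev inequality on the bounded domain
`Ω_T = (0,1)ⁿ × (0,T)`** (Theorem 1.2), for functions smooth on a neighborhood of the
closure of `Ω_T`. -/
theorem parabolic_log_sobolev_inequality_bounded (n m : ℕ) (hn : 1 ≤ n) (hm : 0 < m)
    (hmn : ((n : ℝ) + 2) / 4 < m) (T : ℝ) (hT : 0 < T) :
    ∃ C : ℝ, 0 < C ∧ ∀ (u : PSpace n → ℝ) (V : Set (PSpace n)),
      IsOpen V → closure (OmegaT n T) ⊆ V → ContDiffOn ℝ (⊤ : ℕ∞) u V →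
      (⨆ z ∈ OmegaT n T, |u z|) ≤
        C * (1 + (pBMO (OmegaT n T) u + ∫ z in OmegaT n T, |u z|) *
          (1 + logPlus (sobNorm m (OmegaT n T) u))) := by
  obtain ⟨r, hr, hcubes⟩ := exists_hasVertexCubes_OmegaT n hT
  obtain ⟨C, hC, h⟩ := parabolic_log_sobolev_inequality_bounded_general n m hmn hr
  exact ⟨C, hC, fun u V hV hOV hu =>
    h _ (isBounded_OmegaT n T) hcubes u V hV hOV (contDiffOn_infty.1 hu (2 * m))⟩

end
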